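/- arXiv:1401.3682 — 4 statements merged into one kernel-verified Lean document; each statement's English description precedes it below -/
import Mathlib

section
/- Achievability part of the broadcast-phase capacity theorem: Let W₁ : A → S(H₁) and W₂ : A → S(H₂) be classical-quantum channels with a common finite input alphabet A (modeling the bidirectional broadcast channel from the relay node to node 1 and node 2). Then for every probability distribution P on A and all ε > 0, δ > 0, for all sufficiently large n there exists an (n, J₁, J₂) bidirectional broadcast code such that (1/n)·log₂ J₁ ≥ χ(P;W₁) − δ, (1/n)·log₂ J₂ ≥ χ(P;W₂) − δ, and both average errors e₁ and e₂ of the code are at most ε. -/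
open scoped BigOperators ComplexOrder

noncomputable section

/-- The Loewner order on operators: `A ≤ B` iff `B - A` is positive semidefinite. -/
def loewnerLE {ι : Type*} [Fintype ι] (A B : Matrix ι ι ℂ) : Prop := (B - A).PosSemidef

/-- A quantum state: a positive semidefinite operator with unit trace. -/
def IsState {ι : Type*} [Fintype ι] (ρ : Matrix ι ι ℂ) : Prop := ρ.PosSemidef ∧ ρ.trace = 1

/-- The von Neumann entropy `S(ρ) = −tr(ρ log₂ ρ)`, computed via eigenvalues. -/
noncomputable def vnEntropy {ι : Type*} [Fintype ι] [DecidableEq ι] (ρ : Matrix ι ι ℂ) : ℝ :=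
  if h : ρ.IsHermitian then -∑ i, h.eigenvalues i * Real.logb 2 (h.eigenvalues i) else 0

/-- The trace norm `‖A‖₁ = tr √(AᴴA)` (sum of singular values). -/
noncomputable def traceNorm {ι : Type*} [Fintype ι] [DecidableEq ι] (A : Matrix ι ι ℂ) : ℝ :=
  ∑ i, Real.sqrt ((Matrix.posSemidef_conjTranspose_mul_self A).1.eigenvalues i)

/-- A probability distribution on a finite set. -/
def IsDist {A : Type*} [Fintype A] (P : A → ℝ) : Prop := (∀ a, 0 ≤ P a) ∧ ∑ a, P a = 1

/-- The Holevo quantity `χ(P;W) = S(PW) − Σ_a P(a) S(W(a))`. -/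
noncomputable def holevo {A ι : Type*} [Fintype A] [Fintype ι] [DecidableEq ι]
    (P : A → ℝ) (W : A → Matrix ι ι ℂ) : ℝ :=
  vnEntropy (∑ a, (P a : ℂ) • W a) - ∑ a, P a * vnEntropy (W a)

/-- Tensor product `M 0 ⊗ ⋯ ⊗ M (n−1)` of matrices, realized on the index set `Fin n → ι`. -/
def tensorPow {n : ℕ} {ι : Type*} [Fintype ι] (M : Fin n → Matrix ι ι ℂ) :
    Matrix (Fin n → ι) (Fin n → ι) ℂ :=
  Matrix.of fun i j => ∏ k, M k (i k) (j k)

/-- The `n`-fold extension `W^{⊗n}(xⁿ) = W(x₁) ⊗ ⋯ ⊗ W(xₙ)` of a cq channel. -/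
def cqPow {A ι : Type*} [Fintype ι] (W : A → Matrix ι ι ℂ) (n : ℕ) (x : Fin n → A) :
    Matrix (Fin n → ι) (Fin n → ι) ℂ :=
  tensorPow fun k => W (x k)

/-- A POVM: positive semidefinite operators summing to at most the identity. -/
def IsPOVM {ι J : Type*} [Fintype ι] [DecidableEq ι] [Fintype J] (D : J → Matrix ι ι ℂ) : Prop :=
  (∀ j, (D j).PosSemidef) ∧ loewnerLE (∑ j, D j) 1

/-- Existence of an `(n, J₁, J₂)` bidirectional broadcast code for the cq channels `W₁`, `W₂`
with average errors `e₁ ≤ ε₁` and `e₂ ≤ ε₂`. -/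
def BroadcastCodeExists {A ι₁ ι₂ : Type*} [Fintype A] [Fintype ι₁] [DecidableEq ι₁]
    [Fintype ι₂] [DecidableEq ι₂]
    (W1 : A → Matrix ι₁ ι₁ ℂ) (W2 : A → Matrix ι₂ ι₂ ℂ)
    (n J1 J2 : ℕ) (ε₁ ε₂ : ℝ) : Prop :=
  ∃ (w : Fin J1 × Fin J2 → Fin n → A)
    (D1 : Fin J2 → Fin J1 → Matrix (Fin n → ι₁) (Fin n → ι₁) ℂ)
    (D2 : Fin J1 → Fin J2 → Matrix (Fin n → ι₂) (Fin n → ι₂) ℂ),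
    (∀ m2, IsPOVM (D1 m2)) ∧ (∀ m1, IsPOVM (D2 m1)) ∧
    (∀ m2, ((J1 : ℝ))⁻¹ * ∑ m1, ((1 - D1 m2 m1) * cqPow W1 n (w (m1, m2))).trace.re ≤ ε₁) ∧
    (∀ m1, ((J2 : ℝ))⁻¹ * ∑ m2, ((1 - D2 m1 m2) * cqPow W2 n (w (m1, m2))).trace.re ≤ ε₂)


/-- Existence of an `(n, J₁, J₂)` code for the cq multiple-access channel `W`
with average error at most `ε`. -/
def MACCodeExists {Y1 Y2 ι : Type*} [Fintype ι] [DecidableEq ι]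
    (W : Y1 → Y2 → Matrix ι ι ℂ) (n J1 J2 : ℕ) (ε : ℝ) : Prop :=
  ∃ (u : Fin J1 → Fin n → Y1) (v : Fin J2 → Fin n → Y2)
    (D : Fin J1 × Fin J2 → Matrix (Fin n → ι) (Fin n → ι) ℂ),
    IsPOVM D ∧
    (1 / ((J1 : ℝ) * (J2 : ℝ))) * ∑ m : Fin J1 × Fin J2,
      ((1 - D m) * tensorPow (fun k => W (u m.1 k) (v m.2 k))).trace.re ≤ ε

end

/-!
Draw a `J₁ × J₂` array of codewords i.i.d. from `P^{⊗n}`. For fixed `m₂` the column of the array is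
a random codebook for `W₁`, and for fixed `m₁` the row is one for `W₂`, so a single random coding
argument for one channel serves both users. The decoder first applies the typical projection of
`(PW)^{⊗n}` and then tests the conditionally typical projections of the codewords one after the
other; by Gao's quantum union bound its error is at most a constant times the error of the two
projections on the transmitted codeword plus the sum of the acceptance probabilities of the wrong
codewords. In expectation each of the latter is at most `2 ^ (-n (χ(P;W) - 2η))`, so the total
vanishes at every rate below `χ(P;W)`.

Both total errors are therefore small for some array. Keeping only the better half of the columns
and of the rows makes every remaining column and row average small, at a cost of one bit per
message.
-/

open Filter Finset

/-! ### Finite probability -/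

section FiniteProbability

variable {Ω : Type*} [Fintype Ω]

/-- The expected value of `f` under the weights `p`. -/
def mean (p f : Ω → ℝ) : ℝ := ∑ ω, p ω * f ω

/-- The probability of the event `S` under the weights `p`. -/
noncomputable def prob (p : Ω → ℝ) (S : Set Ω) : ℝ := mean p (S.indicator 1)

lemma mean_add (p f g : Ω → ℝ) : mean p (fun ω => f ω + g ω) = mean p f + mean p g := by
  simp only [mean, mul_add, sum_add_distrib]

lemma mean_const_mul (p f : Ω → ℝ) (c : ℝ) : mean p (fun ω => c * f ω) = c * mean p f := by
  simp only [mean, mul_sum, mul_left_comm]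

lemma mean_sum {ι : Type*} (p : Ω → ℝ) (s : Finset ι) (f : ι → Ω → ℝ) :
    mean p (fun ω => ∑ i ∈ s, f i ω) = ∑ i ∈ s, mean p (f i) := by
  simp only [mean, mul_sum]
  exact sum_comm

lemma mean_mono {p f g : Ω → ℝ} (hp : ∀ ω, 0 ≤ p ω) (h : ∀ ω, f ω ≤ g ω) :
    mean p f ≤ mean p g :=
  sum_le_sum fun ω _ => mul_le_mul_of_nonneg_left (h ω) (hp ω)

lemma IsDist.mean_const {p : Ω → ℝ} (hp : IsDist p) (c : ℝ) : mean p (fun _ => c) = c := by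
  rw [mean, ← sum_mul, hp.2, one_mul]

lemma IsDist.exists_le_of_mean_le {p f : Ω → ℝ} (hp : IsDist p) {c : ℝ} (h : mean p f ≤ c) :
    ∃ ω, f ω ≤ c := by
  by_contra! hc
  exact h.not_gt ((convex_Ioi c).sum_mem (fun ω _ => hp.1 ω) hp.2 fun ω _ => hc ω)

lemma mul_prob_le_mean {p f : Ω → ℝ} (hp : ∀ ω, 0 ≤ p ω) {S : Set Ω} {c : ℝ}
    (hf : ∀ ω, 0 ≤ f ω) (hc : ∀ ω ∈ S, c ≤ f ω) : c * prob p S ≤ mean p f := by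
  rw [prob, ← mean_const_mul]
  refine mean_mono hp fun ω => ?_
  by_cases hω : ω ∈ S
  · simpa [hω] using hc ω hω
  · simpa [hω] using hf ω

lemma prob_le_prob {p : Ω → ℝ} (hp : ∀ ω, 0 ≤ p ω) {S T : Set Ω}
    (h : ∀ ω ∈ S, p ω ≠ 0 → ω ∈ T) : prob p S ≤ prob p T := by
  refine sum_le_sum fun ω _ => ?_
  rcases eq_or_ne (p ω) 0 with h0 | h0
  · simp [h0]
  · refine mul_le_mul_of_nonneg_left ?_ (hp ω)
    by_cases hω : ω ∈ S
    · simp [hω, h ω hω h0]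
    · simp [hω, Set.indicator_nonneg]

variable {I J : Type*} [Fintype I] [Fintype J]

/-- The product distribution: independent coordinates, the `i`-th one with law `p i`. -/
def prodDist (p : I → Ω → ℝ) (x : I → Ω) : ℝ := ∏ i, p i (x i)

/-- The law of a family of independent samples of `p`. -/
abbrev iidDist (p : Ω → ℝ) : (I → Ω) → ℝ := prodDist fun _ => p

lemma isDist_prodDist [DecidableEq I] {p : I → Ω → ℝ} (hp : ∀ i, IsDist (p i)) :
    IsDist (prodDist p) := by
  refine ⟨fun x => prod_nonneg fun i _ => (hp i).1 _, ?_⟩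
  simp only [prodDist, ← Fintype.prod_sum, (hp _).2, prod_const_one]

/-! ### Marginals of product distributions and the weak law of large numbers -/

lemma sum_prodDist_fiber [DecidableEq J] [DecidableEq Ω] {p : J → Ω → ℝ}
    (hp : ∀ j, IsDist (p j)) {e : I → J} (he : e.Injective) (x : I → Ω) :
    ∑ w : J → Ω with (fun i => w (e i)) = x, prodDist p w = prodDist (fun i => p (e i)) x := by
  have hfiber : ({w | (fun i => w (e i)) = x} : Finset (J → Ω)) =
      Fintype.piFinset fun j => {z | ∀ i, e i = j → z = x i} := by
    ext w
    simpa [funext_iff] using ⟨fun h j i hij => hij ▸ h i, fun h i => h _ i rfl⟩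
  rw [hfiber]
  simp only [prodDist, ← prod_univ_sum]
  symm
  refine Fintype.prod_of_injective e he _ _ (fun j hj => ?_) fun i => ?_
  · have hj' : ∀ i, e i ≠ j := fun i hi => hj ⟨i, hi⟩
    simpa [hj'] using (hp j).2
  · simp [he.eq_iff, filter_eq']

lemma mean_prodDist_comp [DecidableEq I] [DecidableEq J] {p : J → Ω → ℝ}
    (hp : ∀ j, IsDist (p j)) {e : I → J} (he : e.Injective) (F : (I → Ω) → ℝ) :
    mean (prodDist p) (fun w => F fun i => w (e i)) = mean (prodDist fun i => p (e i)) F := by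
  classical
  rw [mean, ← sum_fiberwise univ (fun w i => w (e i))]
  refine sum_congr rfl fun x _ => ?_
  rw [← sum_prodDist_fiber hp he, sum_mul]
  refine sum_congr rfl fun w hw => ?_
  rw [(mem_filter.1 hw).2]

lemma mean_prodDist_apply [DecidableEq J] {p : J → Ω → ℝ} (hp : ∀ j, IsDist (p j)) (j : J)
    (F : Ω → ℝ) : mean (prodDist p) (fun w => F (w j)) = mean (p j) F := by
  rw [mean_prodDist_comp hp (Function.injective_of_subsingleton fun _ : Unit => j)
    (fun x => F (x ())), mean, ← (Equiv.funUnique Unit Ω).symm.sum_comp]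
  simp [mean, prodDist]

lemma mean_prodDist_apply₂ [DecidableEq J] {p : J → Ω → ℝ} (hp : ∀ j, IsDist (p j)) {i j : J}
    (hij : i ≠ j) (F : Ω → Ω → ℝ) :
    mean (prodDist p) (fun w => F (w i) (w j)) = mean (p i) fun y => mean (p j) (F y) := by
  have he : Function.Injective ![i, j] := by
    simpa [Function.Injective, Fin.forall_fin_two] using ⟨hij, hij.symm⟩
  refine (mean_prodDist_comp hp he fun x => F (x 0) (x 1)).trans ?_
  rw [mean, ← (finTwoArrowEquiv Ω).symm.sum_comp, Fintype.sum_prod_type]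
  simp [mean, prodDist, Fin.prod_univ_two, mul_sum, mul_assoc]

lemma mean_prodDist_sum_sq [DecidableEq J] {p : J → Ω → ℝ} (hp : ∀ j, IsDist (p j))
    {g : J → Ω → ℝ} (hg : ∀ j, mean (p j) (g j) = 0) :
    mean (prodDist p) (fun x => (∑ j, g j (x j)) ^ 2) = ∑ j, mean (p j) (fun z => g j z ^ 2) := by
  simp only [sq, sum_mul_sum, mean_sum]
  refine sum_congr rfl fun i _ => ?_
  rw [sum_eq_single i (fun j _ hji => ?_) (by simp)]
  · exact mean_prodDist_apply hp i fun z => g i z * g i z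
  · rw [mean_prodDist_apply₂ hp hji.symm fun y z => g i y * g j z]
    simp only [mean_const_mul, hg j, mul_zero, (hp i).mean_const]

lemma IsDist.eventually_prob_deviation_le {p : Ω → ℝ} (hp : IsDist p) (f : Ω → ℝ) {η ε : ℝ}
    (hη : 0 < η) (hε : 0 < ε) :
    ∀ᶠ n : ℕ in atTop, prob (iidDist p)
      {x : Fin n → Ω | n * η ≤ |∑ k, f (x k) - n * mean p f|} ≤ ε := by
  set μ := mean p f
  set V := mean p fun z => (f z - μ) ^ 2
  have hcentered : mean p (fun z => f z - μ) = 0 := by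
    simp only [sub_eq_add_neg, mean_add, hp.mean_const]
    exact add_neg_cancel μ
  filter_upwards [eventually_gt_atTop 0, eventually_ge_atTop ⌈V / (ε * η ^ 2)⌉₊] with n hn0 hnV
  have hVn : V ≤ n * (ε * η ^ 2) := (div_le_iff₀ (by positivity)).1 (Nat.ceil_le.1 hnV)
  have hchebyshev : (n * η) ^ 2 * prob (iidDist p)
      {x : Fin n → Ω | n * η ≤ |∑ k, f (x k) - n * μ|} ≤ n * V := by
    calc _ ≤ mean (iidDist p) fun x : Fin n → Ω => (∑ k, (f (x k) - μ)) ^ 2 := by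
          refine mul_prob_le_mean (isDist_prodDist fun _ => hp).1 (fun _ => sq_nonneg _) ?_
          intro x hx
          rw [show ∑ k, (f (x k) - μ) = ∑ k, f (x k) - n * μ by simp, ← sq_abs (_ - _)]
          exact pow_le_pow_left₀ (by positivity) hx 2
      _ = n * V := by
          rw [mean_prodDist_sum_sq (fun _ => hp) fun _ => hcentered]
          simp [V]
  refine le_of_mul_le_mul_left (hchebyshev.trans ?_) (show 0 < (n * η) ^ 2 by positivity)
  calc n * V ≤ n * (n * (ε * η ^ 2)) := by gcongr
    _ = (n * η) ^ 2 * ε := by ring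

end FiniteProbability

/-! ### Sequential measurements -/

section SequentialDecoding

variable {R : Type*} [Ring R] [StarRing R]

/-- The sequential decoder for the projections `Q 0, …, Q (J - 1)`: test them one after the other,
from the last to the first, and announce the first one that accepts. The operator of `m` is
`star B * B` with `B = Q m * (1 - Q (m + 1)) * ⋯ * (1 - Q (J - 1))`. -/
def seqDecoder : {J : ℕ} → (Fin J → R) → Fin J → R
  | 0, _ => Fin.elim0
  | _ + 1, Q =>
    let reject := (List.ofFn fun i => 1 - Fin.tail Q i).prod
    Fin.cons (star reject * Q 0 * reject) (seqDecoder (Fin.tail Q))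

lemma seqDecoder_zero {J : ℕ} (Q : Fin (J + 1) → R) :
    seqDecoder Q 0 = star (List.ofFn fun i : Fin J => 1 - Q i.succ).prod * Q 0 *
      (List.ofFn fun i : Fin J => 1 - Q i.succ).prod := rfl

lemma seqDecoder_succ {J : ℕ} (Q : Fin (J + 1) → R) (m : Fin J) :
    seqDecoder Q m.succ = seqDecoder (fun i => Q i.succ) m := rfl

lemma sum_seqDecoder {J : ℕ} {Q : Fin J → R} (hQ : ∀ i, IsStarProjection (Q i)) :
    ∑ m, seqDecoder Q m = 1 - star (List.ofFn fun i => 1 - Q i).prod *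
      (List.ofFn fun i => 1 - Q i).prod := by
  induction J with
  | zero => simp
  | succ J ih =>
    have hreject : star (1 - Q 0) * (1 - Q 0) = 1 - Q 0 := by
      rw [(hQ 0).one_sub.isSelfAdjoint.star_eq, (hQ 0).one_sub.isIdempotentElem.eq]
    simp only [Fin.sum_univ_succ, seqDecoder_zero, seqDecoder_succ, ih fun i => hQ i.succ,
      List.ofFn_succ, List.prod_cons, star_mul]
    rw [mul_assoc (star _) (star (1 - Q 0)), ← mul_assoc (star (1 - Q 0)), hreject]
    noncomm_ring

variable [PartialOrder R] [StarOrderedRing R]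

lemma seqDecoder_nonneg {J : ℕ} {Q : Fin J → R} (hQ : ∀ i, 0 ≤ Q i) (m : Fin J) :
    0 ≤ seqDecoder Q m := by
  induction J with
  | zero => exact m.elim0
  | succ J ih =>
    cases m using Fin.cases with
    | zero => exact star_left_conjugate_nonneg (hQ 0) _
    | succ m => exact ih (fun i => hQ i.succ) m

lemma sum_seqDecoder_le_one {J : ℕ} {Q : Fin J → R} (hQ : ∀ i, IsStarProjection (Q i)) :
    ∑ m, seqDecoder Q m ≤ 1 :=
  (sum_seqDecoder hQ).trans_le (sub_le_self _ (star_mul_self_nonneg _))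

-- Expands `star (2 * (1 - e) - b) * (2 * (1 - e) - b) ≥ 0` for `b = (1 - e) * v`.
lemma two_nsmul_add_star_le_of_isStarProjection {e : R} (he : IsStarProjection e) (v : R) :
    2 • ((1 - e) * v + star ((1 - e) * v)) ≤ 4 • (1 - e) + star v * (1 - e) * v := by
  have hsq : (1 - e) * (1 - e) = 1 - e := he.one_sub.isIdempotentElem
  have hstar : star (1 - e) = 1 - e := he.one_sub.isSelfAdjoint
  have hnonneg := star_mul_self_nonneg (2 • (1 - e) - (1 - e) * v)
  rw [← sub_nonneg]
  convert hnonneg using 1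
  generalize 1 - e = f at *
  have hv : f * (f * v) = f * v := by rw [← mul_assoc, hsq]
  simp only [star_sub, star_nsmul, star_mul, hstar, sub_mul, mul_sub, smul_mul_assoc,
    mul_smul_comm, mul_assoc, hsq, hv]
  abel

lemma two_nsmul_one_sub_prod_add_star_le {L : List R} (hL : ∀ e ∈ L, IsStarProjection e) :
    2 • ((1 - L.prod) + star (1 - L.prod)) ≤
      4 • (L.map (1 - ·)).sum + (1 - star L.prod * L.prod) := by
  induction L with
  | nil => simp
  | cons e L ih =>
    rw [List.forall_mem_cons] at hL
    have he : star e * e = e := by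
      rw [hL.1.isSelfAdjoint.star_eq, hL.1.isIdempotentElem.eq]
    have hsplit : star (e * L.prod) * (e * L.prod) = star L.prod * e * L.prod := by
      rw [star_mul, mul_assoc, ← mul_assoc (star e), he, mul_assoc]
    have hadd := add_le_add (ih hL.2) (two_nsmul_add_star_le_of_isStarProjection hL.1 L.prod)
    rw [List.prod_cons, List.map_cons, List.sum_cons, hsplit]
    convert hadd using 1
    · simp only [sub_mul, one_mul, star_sub]
      abel
    · simp only [mul_sub, sub_mul, mul_one]
      abel

/-- Gao's quantum union bound. -/
lemma one_sub_star_prod_mul_prod_le {L : List R} (hL : ∀ e ∈ L, IsStarProjection e) :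
    1 - star L.prod * L.prod ≤ 4 • (L.map (1 - ·)).sum := by
  have hsq : 1 - star L.prod * L.prod ≤ (1 - L.prod) + star (1 - L.prod) := by
    rw [← sub_nonneg]
    convert star_mul_self_nonneg (1 - L.prod) using 1
    simp only [star_sub, star_one]
    noncomm_ring
  have htwo := (nsmul_le_nsmul_right hsq 2).trans (two_nsmul_one_sub_prod_add_star_le hL)
  rwa [two_nsmul, add_le_add_iff_right] at htwo

lemma one_sub_seqDecoder_le {J : ℕ} {Q : Fin J → R} (hQ : ∀ i, IsStarProjection (Q i))
    (m : Fin J) : 1 - seqDecoder Q m ≤ 4 • (1 - Q m + ∑ i ∈ univ.erase m, Q i) := by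
  induction J with
  | zero => exact m.elim0
  | succ J ih =>
    cases m using Fin.cases with
    | zero =>
      have hL : ∀ e ∈ Q 0 :: List.ofFn fun i : Fin J => 1 - Q i.succ, IsStarProjection e := by
        simpa [List.forall_mem_ofFn_iff] using ⟨hQ 0, fun i => (hQ (Fin.succ i)).one_sub⟩
      convert one_sub_star_prod_mul_prod_le hL using 1
      · rw [seqDecoder_zero, List.prod_cons, star_mul, (hQ 0).isSelfAdjoint.star_eq]
        simp only [mul_assoc, ← mul_assoc (Q 0) (Q 0), (hQ 0).isIdempotentElem.eq]
      · rw [sum_erase_eq_sub (mem_univ _), Fin.sum_univ_succ]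
        simp [List.map_ofFn, List.sum_ofFn]
    | succ m =>
      refine (ih (fun i => hQ i.succ) m).trans (nsmul_le_nsmul_right ?_ 4)
      rw [sum_erase_eq_sub (mem_univ _), sum_erase_eq_sub (mem_univ _), Fin.sum_univ_succ]
      gcongr
      exact le_add_of_nonneg_left (hQ 0).nonneg

lemma conjugate_le_of_isStarProjection {r : R} (hr : IsStarProjection r) {a : R} (ha0 : 0 ≤ a)
    (ha1 : a ≤ 1) : r * a * r ≤ 2 • a + 2 • (1 - r) := by
  have hreflect : 0 ≤ (1 + (1 - r)) * a * (1 + (1 - r)) :=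
    ((IsSelfAdjoint.one R).add hr.one_sub.isSelfAdjoint).conjugate_nonneg ha0
  have hcompl : (1 - r) * a * (1 - r) ≤ 1 - r := by
    simpa only [mul_one, hr.one_sub.isIdempotentElem.eq] using
      hr.one_sub.isSelfAdjoint.conjugate_le_conjugate ha1
  calc r * a * r ≤ r * a * r + (1 + (1 - r)) * a * (1 + (1 - r)) :=
        le_add_of_nonneg_right hreflect
    _ = 2 • a + 2 • ((1 - r) * a * (1 - r)) := by noncomm_ring
    _ ≤ 2 • a + 2 • (1 - r) := by gcongr

lemma one_sub_conjugate_seqDecoder_le {J : ℕ} {Q : Fin J → R} (hQ : ∀ i, IsStarProjection (Q i))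
    {r : R} (hr : IsStarProjection r) (m : Fin J) :
    1 - r * seqDecoder Q m * r ≤
      9 • (1 - r) + 8 • (1 - Q m) + 4 • ∑ i ∈ univ.erase m, r * Q i * r := by
  have hconj := hr.isSelfAdjoint.conjugate_le_conjugate (one_sub_seqDecoder_le hQ m)
  calc 1 - r * seqDecoder Q m * r
      = (1 - r) + r * (1 - seqDecoder Q m) * r := by
        rw [mul_sub, sub_mul, mul_one, hr.isIdempotentElem.eq]
        abel
    _ ≤ (1 - r) + r * (4 • (1 - Q m + ∑ i ∈ univ.erase m, Q i)) * r := by gcongr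
    _ = (1 - r) + 4 • (r * (1 - Q m) * r) + 4 • ∑ i ∈ univ.erase m, r * Q i * r := by
        rw [← sum_mul, ← mul_sum]
        noncomm_ring
    _ ≤ (1 - r) + 4 • (2 • (1 - Q m) + 2 • (1 - r)) + 4 • ∑ i ∈ univ.erase m, r * Q i * r := by
        gcongr
        exact conjugate_le_of_isStarProjection hr (hQ m).one_sub.nonneg (hQ m).one_sub.le_one
    _ = _ := by abel

end SequentialDecoding

/-! ### States, measurements and the Born rule -/

section BornRule

open Matrix
open scoped MatrixOrder

variable {κ : Type*} [Fintype κ]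

/-- The Born rule: the probability `tr (M ρ)` of the outcome with effect `M` in the state `ρ`, as a
real-linear functional of `M`. -/
def bornProb (ρ : Matrix κ κ ℂ) : Matrix κ κ ℂ →ₗ[ℝ] ℝ where
  toFun M := (M * ρ).trace.re
  map_add' M N := by simp [add_mul]
  map_smul' c M := by simp

lemma bornProb_apply (ρ M : Matrix κ κ ℂ) : bornProb ρ M = (M * ρ).trace.re := rfl

lemma bornProb_comm (ρ M : Matrix κ κ ℂ) : bornProb ρ M = bornProb M ρ := by
  rw [bornProb_apply, bornProb_apply, trace_mul_comm]

lemma bornProb_conjugate (ρ M R : Matrix κ κ ℂ) :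
    bornProb ρ (R * M * R) = bornProb (R * ρ * R) M := by
  rw [bornProb_apply, bornProb_apply, trace_mul_comm, mul_assoc R, ← mul_assoc ρ,
    trace_mul_comm, mul_assoc, mul_assoc]

lemma bornProb_nonneg {ρ M : Matrix κ κ ℂ} (hρ : 0 ≤ ρ) (hM : 0 ≤ M) : 0 ≤ bornProb ρ M := by
  classical
  obtain ⟨C, rfl⟩ := CStarAlgebra.nonneg_iff_eq_star_mul_self.1 hρ
  rw [bornProb_apply, ← mul_assoc, trace_mul_comm, ← mul_assoc]
  exact (Complex.nonneg_iff.1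
    (nonneg_iff_posSemidef.1 (star_right_conjugate_nonneg hM C)).trace_nonneg).1

lemma bornProb_mono {ρ : Matrix κ κ ℂ} (hρ : 0 ≤ ρ) : Monotone (bornProb ρ) := fun M N h => by
  simpa using bornProb_nonneg hρ (sub_nonneg.2 h)

variable {X : Type*} [Fintype X]

/-- The average state `PW = ∑ x, P x • W x` of an ensemble. -/
def mixedState (P : X → ℝ) (W : X → Matrix κ κ ℂ) : Matrix κ κ ℂ := ∑ x, (P x : ℂ) • W x

lemma mean_bornProb (P : X → ℝ) (W : X → Matrix κ κ ℂ) (M : Matrix κ κ ℂ) :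
    mean P (fun x => bornProb (W x) M) = bornProb (mixedState P W) M := by
  simp [mean, bornProb_apply, mixedState, mul_sum, trace_sum]

lemma IsDist.isState_mixedState {P : X → ℝ} (hP : IsDist P) {W : X → Matrix κ κ ℂ}
    (hW : ∀ x, IsState (W x)) : IsState (mixedState P W) := by
  refine ⟨posSemidef_sum _ fun x _ => (hW x).1.smul (by exact_mod_cast hP.1 x), ?_⟩
  simp only [mixedState, trace_sum, trace_smul, (hW _).2, smul_eq_mul, mul_one]
  exact_mod_cast hP.2

variable [DecidableEq κ]

lemma isPOVM_iff {J : Type*} [Fintype J] {D : J → Matrix κ κ ℂ} :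
    IsPOVM D ↔ (∀ j, 0 ≤ D j) ∧ ∑ j, D j ≤ 1 := by
  simp only [nonneg_iff_posSemidef]
  rfl

lemma IsPOVM.comp_embedding {J K : Type*} [Fintype J] [Fintype K] {D : J → Matrix κ κ ℂ}
    (hD : IsPOVM D) (e : K ↪ J) : IsPOVM fun k => D (e k) := by
  rw [isPOVM_iff] at hD ⊢
  refine ⟨fun k => hD.1 _, le_trans ?_ hD.2⟩
  rw [← sum_map univ e D]
  exact sum_le_univ_sum_of_nonneg hD.1

lemma IsPOVM.bornProb_one_sub_nonneg {J : Type*} [Fintype J] {D : J → Matrix κ κ ℂ}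
    (hD : IsPOVM D) {ρ : Matrix κ κ ℂ} (hρ : 0 ≤ ρ) (j : J) : 0 ≤ bornProb ρ (1 - D j) := by
  rw [isPOVM_iff] at hD
  refine bornProb_nonneg hρ (sub_nonneg.2 (le_trans ?_ hD.2))
  exact single_le_sum (fun i _ => hD.1 i) (mem_univ j)

end BornRule

/-! ### Tensor powers -/

section TensorPow

open Matrix
open scoped MatrixOrder

variable {n : ℕ} {ι : Type*} [Fintype ι]

lemma tensorPow_mul (M N : Fin n → Matrix ι ι ℂ) :
    tensorPow M * tensorPow N = tensorPow fun k => M k * N k := by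
  ext i j
  simp only [tensorPow, mul_apply, of_apply, ← prod_mul_distrib, Fintype.prod_sum]

lemma star_tensorPow (M : Fin n → Matrix ι ι ℂ) :
    star (tensorPow M) = tensorPow fun k => star (M k) := by
  ext i j
  simp [tensorPow, star_apply]

lemma mixedState_cqPow {A : Type*} [Fintype A] (P : A → ℝ) (W : A → Matrix ι ι ℂ) :
    mixedState (iidDist P) (cqPow W n) = tensorPow fun _ => mixedState P W := by
  ext i j
  simp [mixedState, cqPow, tensorPow, prodDist, Matrix.sum_apply, Fintype.prod_sum,
    prod_mul_distrib]

lemma tensorPow_nonneg {M : Fin n → Matrix ι ι ℂ} (hM : ∀ k, 0 ≤ M k) : 0 ≤ tensorPow M := by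
  classical
  choose C hC using fun k => CStarAlgebra.nonneg_iff_eq_star_mul_self.1 (hM k)
  rw [funext hC, ← tensorPow_mul, ← star_tensorPow]
  exact star_mul_self_nonneg _

lemma cqPow_nonneg {A : Type*} {W : A → Matrix ι ι ℂ} (hW : ∀ a, (W a).PosSemidef)
    (x : Fin n → A) : 0 ≤ cqPow W n x :=
  tensorPow_nonneg fun k => nonneg_iff_posSemidef.2 (hW (x k))

variable [DecidableEq ι]

lemma tensorPow_diagonal (d : Fin n → ι → ℂ) :
    tensorPow (fun k => diagonal (d k)) = diagonal fun i => ∏ k, d k (i k) := by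
  ext i j
  simp only [tensorPow, of_apply, diagonal_apply, funext_iff]
  split_ifs with h
  · simp only [h, if_true]
  · obtain ⟨k, hk⟩ := not_forall.1 h
    exact prod_eq_zero (mem_univ k) (if_neg hk)

lemma tensorPow_one : tensorPow (fun _ : Fin n => (1 : Matrix ι ι ℂ)) = 1 := by
  simpa using tensorPow_diagonal (n := n) fun _ (_ : ι) => (1 : ℂ)

/-- The tensor product of unitary matrices. -/
def tensorUnitary (U : Fin n → unitaryGroup ι ℂ) : unitaryGroup (Fin n → ι) ℂ :=
  ⟨tensorPow fun k => U k, by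
    rw [mem_unitaryGroup_iff, star_tensorPow, tensorPow_mul, ← tensorPow_one]
    exact congrArg tensorPow (funext fun k => Unitary.coe_mul_star_self (U k))⟩

end TensorPow

/-! ### Spectral projections -/

section SpectralProjection

open Matrix
open scoped MatrixOrder

variable {κ : Type*} [Fintype κ] [DecidableEq κ]

/-- The operator with eigenvalues `d` in the orthonormal basis formed by the columns of `U`, as a
homomorphism of star algebras in `d`. -/
noncomputable def diagonalIn (U : unitaryGroup κ ℂ) : (κ → ℝ) →⋆ₐ[ℝ] Matrix κ κ ℂ :=
  (Unitary.conjStarAlgAut ℝ (Matrix κ κ ℂ) U : Matrix κ κ ℂ →⋆ₐ[ℝ] Matrix κ κ ℂ).comp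
    { (diagonalAlgHom ℝ).comp (Complex.ofRealAm.compLeft κ) with
      map_star' := fun d => by simp [star_eq_conjTranspose, diagonal_conjTranspose] }

lemma diagonalIn_apply (U : unitaryGroup κ ℂ) (d : κ → ℝ) :
    diagonalIn U d = U * diagonal (fun i => (d i : ℂ)) * star (U : Matrix κ κ ℂ) := rfl

lemma trace_diagonalIn (U : unitaryGroup κ ℂ) (d : κ → ℝ) :
    (diagonalIn U d).trace = ∑ i, (d i : ℂ) := by
  rw [diagonalIn_apply, trace_mul_comm, ← mul_assoc, Unitary.coe_star_mul_self, one_mul,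
    trace_diagonal]

lemma bornProb_diagonalIn (U : unitaryGroup κ ℂ) (d e : κ → ℝ) :
    bornProb (diagonalIn U d) (diagonalIn U e) = mean d e := by
  rw [bornProb_apply, ← map_mul, trace_diagonalIn]
  simp [mean, mul_comm]

lemma tensorPow_diagonalIn {n : ℕ} {ι : Type*} [Fintype ι] [DecidableEq ι]
    (U : Fin n → unitaryGroup ι ℂ) (d : Fin n → ι → ℝ) :
    tensorPow (fun k => diagonalIn (U k) (d k)) = diagonalIn (tensorUnitary U) (prodDist d) := by
  simp only [diagonalIn_apply, ← tensorPow_mul, ← star_tensorPow, tensorPow_diagonal, prodDist,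
    Complex.ofReal_prod]
  rfl

lemma IsState.exists_eq_diagonalIn {ρ : Matrix κ κ ℂ} (hρ : IsState ρ) :
    ∃ (U : unitaryGroup κ ℂ) (l : κ → ℝ), IsDist l ∧ ρ = diagonalIn U l ∧
      vnEntropy ρ = mean l fun i => -Real.logb 2 (l i) := by
  have hH := hρ.1.isHermitian
  have htrace : (∑ i, (hH.eigenvalues i : ℂ)) = 1 := hH.trace_eq_sum_eigenvalues.symm.trans hρ.2
  refine ⟨hH.eigenvectorUnitary, hH.eigenvalues, ⟨hρ.1.eigenvalues_nonneg, ?_⟩,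
    hH.spectral_theorem, ?_⟩
  · exact_mod_cast htrace
  · simp [vnEntropy, hH, mean]

/-- The projection onto the span of the basis vectors of `U` whose index lies in `S`. -/
noncomputable def spectralProj (U : unitaryGroup κ ℂ) (S : Set κ) : Matrix κ κ ℂ :=
  diagonalIn U (S.indicator 1)

lemma isStarProjection_spectralProj (U : unitaryGroup κ ℂ) (S : Set κ) :
    IsStarProjection (spectralProj U S) := by
  have hS : IsStarProjection (S.indicator 1 : κ → ℝ) :=
    ⟨by ext i; by_cases h : i ∈ S <;> simp [h], by ext i; simp⟩
  exact hS.map (diagonalIn U)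

lemma trace_spectralProj_le {U : unitaryGroup κ ℂ} {l : κ → ℝ} (hl : IsDist l) {S : Set κ} {t : ℝ}
    (ht : 0 < t) (hS : ∀ i ∈ S, t ≤ l i) : (spectralProj U S).trace.re ≤ t⁻¹ := by
  have hcount : t * (∑ i, S.indicator (1 : κ → ℝ) i) ≤ 1 := by
    rw [← hl.2, mul_sum]
    refine sum_le_sum fun i _ => ?_
    by_cases hi : i ∈ S
    · simpa [hi] using hS i hi
    · simpa [hi] using hl.1 i
  rw [spectralProj, trace_diagonalIn, ← Complex.ofReal_sum, Complex.ofReal_re, ← one_div]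
  exact (le_div_iff₀' ht).2 hcount

lemma bornProb_one_sub_spectralProj (U : unitaryGroup κ ℂ) (l : κ → ℝ) (S : Set κ) :
    bornProb (diagonalIn U l) (1 - spectralProj U S) = prob l Sᶜ := by
  rw [spectralProj, ← map_one (diagonalIn U), ← map_sub, bornProb_diagonalIn, prob,
    Set.indicator_compl]

lemma spectralProj_conjugate_le {U : unitaryGroup κ ℂ} {l : κ → ℝ} {S : Set κ} {t : ℝ}
    (ht : 0 ≤ t) (hS : ∀ i ∈ S, l i ≤ t) :
    spectralProj U S * diagonalIn U l * spectralProj U S ≤ t • 1 := by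
  rw [spectralProj, ← map_mul, ← map_mul, ← map_one (diagonalIn U), ← map_smul]
  refine OrderHomClass.mono (diagonalIn U) fun i => ?_
  by_cases hi : i ∈ S
  · simpa [hi] using hS i hi
  · simpa [hi] using ht

end SpectralProjection

/-! ### Conditional typicality -/

section Typicality

open Real

variable {A ι : Type*}

/-- The sequences whose probability under `prodDist l` is `2 ^ (-n H)` up to a factor
`2 ^ (± n η)`. -/
def typicalSet {n : ℕ} (l : Fin n → ι → ℝ) (H η : ℝ) : Set (Fin n → ι) :=
  {i | (2 : ℝ) ^ (-(n * (H + η))) ≤ prodDist l i ∧ prodDist l i ≤ (2 : ℝ) ^ (-(n * (H - η)))}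

lemma le_abs_sum_neg_logb_sub_of_notMem_typicalSet {n : ℕ} {l : Fin n → ι → ℝ} {H η : ℝ}
    {i : Fin n → ι} (hl : ∀ k, 0 < l k (i k)) (hi : i ∉ typicalSet l H η) :
    n * η ≤ |∑ k, -logb 2 (l k (i k)) - n * H| := by
  have hpos : 0 < prodDist l i := prod_pos fun k _ => hl k
  have hlog : ∑ k, -logb 2 (l k (i k)) = -logb 2 (prodDist l i) := by
    rw [sum_neg_distrib, prodDist, logb_prod _ _ fun k _ => (hl k).ne']
  rw [hlog, le_abs]
  rw [typicalSet, Set.mem_ofPred_eq, not_and_or, not_le, not_le,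
    ← logb_lt_iff_lt_rpow one_lt_two hpos, ← lt_logb_iff_rpow_lt one_lt_two hpos] at hi
  rcases hi with hi | hi
  · left; linarith
  · right; linarith

variable [Fintype A] [Fintype ι]

/-- The law of `(a, i)` when `a` has law `P` and `i` has conditional law `l a`. -/
def jointDist (P : A → ℝ) (l : A → ι → ℝ) (z : A × ι) : ℝ := P z.1 * l z.1 z.2

lemma mean_jointDist (P : A → ℝ) (l : A → ι → ℝ) (f : A → ι → ℝ) :
    mean (jointDist P l) (fun z => f z.1 z.2) = mean P fun a => mean (l a) (f a) := by
  simp only [mean, jointDist, Fintype.sum_prod_type, mul_sum, mul_assoc]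

lemma isDist_jointDist {P : A → ℝ} (hP : IsDist P) {l : A → ι → ℝ} (hl : ∀ a, IsDist (l a)) :
    IsDist (jointDist P l) := by
  refine ⟨fun z => mul_nonneg (hP.1 _) ((hl _).1 _), ?_⟩
  simp only [jointDist, Fintype.sum_prod_type, ← mul_sum, (hl _).2, mul_one, hP.2]

lemma mean_iidDist_jointDist {I : Type*} [Fintype I] [DecidableEq I] (P : A → ℝ) (l : A → ι → ℝ)
    (F : (I → A) → (I → ι) → ℝ) :
    mean (iidDist (jointDist P l)) (fun z => F (fun k => (z k).1) fun k => (z k).2) =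
      mean (iidDist P) fun x => mean (prodDist fun k => l (x k)) (F x) := by
  rw [mean, ← (Equiv.arrowProdEquivProdArrow I (fun _ => A) fun _ => ι).symm.sum_comp,
    Fintype.sum_prod_type]
  simp only [mean, prodDist, jointDist, Equiv.arrowProdEquivProdArrow, Equiv.coe_fn_symm_mk,
    prod_mul_distrib, mul_sum, mul_assoc]

lemma IsDist.eventually_mean_prob_compl_typicalSet_le {P : A → ℝ} (hP : IsDist P)
    {l : A → ι → ℝ} (hl : ∀ a, IsDist (l a)) {η ε : ℝ} (hη : 0 < η) (hε : 0 < ε) :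
    ∀ᶠ n : ℕ in atTop, mean (iidDist P) (fun x : Fin n → A =>
      prob (prodDist fun k => l (x k)) (typicalSet (fun k => l (x k))
        (mean P fun a => mean (l a) fun i => -logb 2 (l a i)) η)ᶜ) ≤ ε := by
  set H := mean P fun a => mean (l a) fun i => -logb 2 (l a i)
  filter_upwards [(isDist_jointDist hP hl).eventually_prob_deviation_le
    (fun z => -logb 2 (l z.1 z.2)) hη hε] with n hn
  rw [mean_jointDist P l fun a i => -logb 2 (l a i)] at hn
  refine le_trans ?_ hn
  simp only [prob]
  rw [← mean_iidDist_jointDist P l fun x i => (typicalSet (fun k => l (x k)) H η)ᶜ.indicator 1 i]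
  refine prob_le_prob (S := {z | (fun k => (z k).2) ∉ typicalSet (fun k => l (z k).1) H η})
    (isDist_prodDist fun _ => isDist_jointDist hP hl).1 fun z hz hz0 => ?_
  refine le_abs_sum_neg_logb_sub_of_notMem_typicalSet (fun k => ?_) hz
  exact ((hl _).1 _).lt_of_ne' (right_ne_zero_of_mul (prod_ne_zero_iff.1 hz0 k (mem_univ k)))

end Typicality

section TypicalProjection

open Matrix
open scoped MatrixOrder

variable {A ι : Type*} [Fintype A] [Fintype ι] [DecidableEq ι]

lemma IsDist.eventually_exists_conditionallyTypicalProj {P : A → ℝ} (hP : IsDist P)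
    {W : A → Matrix ι ι ℂ} (hW : ∀ a, IsState (W a)) {η ε : ℝ} (hη : 0 < η) (hε : 0 < ε) :
    ∀ᶠ n : ℕ in atTop, ∃ Q : (Fin n → A) → Matrix (Fin n → ι) (Fin n → ι) ℂ,
      (∀ x, IsStarProjection (Q x)) ∧
      (∀ x, (Q x).trace.re ≤ 2 ^ (n * (mean P (fun a => vnEntropy (W a)) + η))) ∧
      (∀ x, Q x * cqPow W n x * Q x ≤
        (2 : ℝ) ^ (-(n * (mean P (fun a => vnEntropy (W a)) - η))) • 1) ∧
      mean (iidDist P) (fun x => bornProb (cqPow W n x) (1 - Q x)) ≤ ε := by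
  choose U l hl hWl hS using fun a => (hW a).exists_eq_diagonalIn
  have hcq (n : ℕ) (x : Fin n → A) : cqPow W n x =
      diagonalIn (tensorUnitary fun k => U (x k)) (prodDist fun k => l (x k)) := by
    rw [← tensorPow_diagonalIn]
    exact congrArg tensorPow (funext fun k => hWl (x k))
  filter_upwards [hP.eventually_mean_prob_compl_typicalSet_le hl hη hε] with n hn
  simp only [← hS] at hn
  set H := mean P fun a => vnEntropy (W a)
  refine ⟨fun x => spectralProj (tensorUnitary fun k => U (x k))
    (typicalSet (fun k => l (x k)) H η), fun x => isStarProjection_spectralProj _ _, fun x => ?_,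
    fun x => ?_, ?_⟩
  · rw [← inv_inv ((2 : ℝ) ^ _), ← Real.rpow_neg zero_le_two]
    exact trace_spectralProj_le (isDist_prodDist fun k => hl (x k)) (by positivity) fun i hi => hi.1
  · rw [hcq]
    exact spectralProj_conjugate_le (by positivity) fun i hi => hi.2
  · simpa only [hcq, bornProb_one_sub_spectralProj] using hn

lemma IsState.eventually_exists_typicalProj {σ : Matrix ι ι ℂ} (hσ : IsState σ) {η ε : ℝ}
    (hη : 0 < η) (hε : 0 < ε) :
    ∀ᶠ n : ℕ in atTop, ∃ R : Matrix (Fin n → ι) (Fin n → ι) ℂ, IsStarProjection R ∧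
      R * tensorPow (fun _ => σ) * R ≤ (2 : ℝ) ^ (-(n * (vnEntropy σ - η))) • 1 ∧
      bornProb (tensorPow fun _ => σ) (1 - R) ≤ ε := by
  have hunit : IsDist fun _ : Unit => (1 : ℝ) := ⟨fun _ => zero_le_one, by simp⟩
  filter_upwards [hunit.eventually_exists_conditionallyTypicalProj (fun _ => hσ) hη hε]
  rintro n ⟨Q, hQ, -, hle, hmean⟩
  rw [hunit.mean_const] at hle
  obtain ⟨x, hx⟩ := (isDist_prodDist fun _ => hunit).exists_le_of_mean_le hmean
  exact ⟨Q x, hQ x, hle x, hx⟩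

end TypicalProjection

/-! ### Random coding -/

section RandomCoding

open Matrix
open scoped MatrixOrder

variable {X κ : Type*} [Fintype X] [Fintype κ] [DecidableEq κ]

/-- Random codebooks of `J` independent codewords of law `q`, sent through the channel `ρ`, can be
decoded with expected error at most `ε` for each message. -/
def HasRandomCode (q : X → ℝ) (ρ : X → Matrix κ κ ℂ) (J : ℕ) (ε : ℝ) : Prop :=
  ∃ D : (Fin J → X) → Fin J → Matrix κ κ ℂ, (∀ c, IsPOVM (D c)) ∧
    ∀ m, mean (iidDist q) (fun c => bornProb (ρ (c m)) (1 - D c m)) ≤ ε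

lemma HasRandomCode.mono {q : X → ℝ} {ρ : X → Matrix κ κ ℂ} {J : ℕ} {ε ε' : ℝ}
    (h : HasRandomCode q ρ J ε) (hε : ε ≤ ε') : HasRandomCode q ρ J ε' :=
  let ⟨D, hD, herr⟩ := h
  ⟨D, hD, fun m => (herr m).trans hε⟩

lemma isPOVM_conjugate_seqDecoder {J : ℕ} {Q : Fin J → Matrix κ κ ℂ}
    (hQ : ∀ i, IsStarProjection (Q i)) {R : Matrix κ κ ℂ} (hR : IsStarProjection R) :
    IsPOVM fun m => R * seqDecoder Q m * R := by
  refine isPOVM_iff.2 ⟨fun m => hR.isSelfAdjoint.conjugate_nonneg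
    (seqDecoder_nonneg (fun i => (hQ i).nonneg) m), ?_⟩
  calc ∑ m, R * seqDecoder Q m * R = R * (∑ m, seqDecoder Q m) * R := by rw [mul_sum, sum_mul]
    _ ≤ R * 1 * R := hR.isSelfAdjoint.conjugate_le_conjugate (sum_seqDecoder_le_one hQ)
    _ = R := by rw [mul_one, hR.isIdempotentElem.eq]
    _ ≤ 1 := hR.le_one

lemma bornProb_conjugate_le {σ Q R : Matrix κ κ ℂ} {t d : ℝ} (hQ : 0 ≤ Q) (ht : 0 ≤ t)
    (hQd : Q.trace.re ≤ d) (hRσ : R * σ * R ≤ t • 1) : bornProb σ (R * Q * R) ≤ t * d := by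
  calc bornProb σ (R * Q * R) = bornProb Q (R * σ * R) := by
        rw [bornProb_conjugate, bornProb_comm]
    _ ≤ bornProb Q (t • 1) := bornProb_mono hQ hRσ
    _ = t * Q.trace.re := by rw [map_smul, bornProb_apply, one_mul, smul_eq_mul]
    _ ≤ t * d := by gcongr

lemma IsDist.hasRandomCode {q : X → ℝ} (hq : IsDist q) {ρ : X → Matrix κ κ ℂ} (hρ : ∀ x, 0 ≤ ρ x)
    {Q : X → Matrix κ κ ℂ} (hQ : ∀ x, IsStarProjection (Q x)) {R : Matrix κ κ ℂ}
    (hR : IsStarProjection R) {α β t d : ℝ} (ht : 0 ≤ t)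
    (hα : bornProb (mixedState q ρ) (1 - R) ≤ α)
    (hβ : mean q (fun x => bornProb (ρ x) (1 - Q x)) ≤ β)
    (hd : ∀ x, (Q x).trace.re ≤ d) (hRt : R * mixedState q ρ * R ≤ t • 1) (J : ℕ) :
    HasRandomCode q ρ J (9 * α + 8 * β + 4 * ((J - 1 : ℝ) * (t * d))) := by
  refine ⟨fun c m => R * seqDecoder (fun i => Q (c i)) m * R,
    fun c => isPOVM_conjugate_seqDecoder (fun i => hQ (c i)) hR, fun m => ?_⟩
  have hcross (i : Fin J) (hi : i ≠ m) :
      mean (iidDist q) (fun c => bornProb (ρ (c m)) (R * Q (c i) * R)) ≤ t * d := by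
    rw [mean_prodDist_apply₂ (fun _ => hq) hi fun y z => bornProb (ρ z) (R * Q y * R)]
    simp only [mean_bornProb]
    refine (mean_mono hq.1 fun x => ?_).trans_eq (hq.mean_const (t * d))
    exact bornProb_conjugate_le (hQ x).nonneg ht (hd x) hRt
  calc mean (iidDist q) (fun c => bornProb (ρ (c m)) (1 - R * seqDecoder (fun i => Q (c i)) m * R))
      ≤ mean (iidDist q) (fun c => 9 * bornProb (ρ (c m)) (1 - R)
          + 8 * bornProb (ρ (c m)) (1 - Q (c m))
          + 4 * ∑ i ∈ univ.erase m, bornProb (ρ (c m)) (R * Q (c i) * R)) := by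
        refine mean_mono (isDist_prodDist fun _ => hq).1 fun c => ?_
        refine (bornProb_mono (hρ (c m))
          (one_sub_conjugate_seqDecoder_le (fun i => hQ (c i)) hR m)).trans_eq ?_
        simp only [map_add, map_nsmul, map_sum]
        simp only [nsmul_eq_mul, Nat.cast_ofNat]
    _ = 9 * bornProb (mixedState q ρ) (1 - R) + 8 * mean q (fun x => bornProb (ρ x) (1 - Q x))
          + 4 * ∑ i ∈ univ.erase m,
            mean (iidDist q) (fun c => bornProb (ρ (c m)) (R * Q (c i) * R)) := by
        simp only [mean_add, mean_const_mul, mean_sum]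
        rw [mean_prodDist_apply (fun _ => hq) m fun x => bornProb (ρ x) (1 - R), mean_bornProb,
          mean_prodDist_apply (fun _ => hq) m fun x => bornProb (ρ x) (1 - Q x)]
    _ ≤ 9 * α + 8 * β + 4 * ((J - 1 : ℝ) * (t * d)) := by
        gcongr
        refine (sum_le_card_nsmul _ _ _ fun i hi => hcross i (ne_of_mem_erase hi)).trans_eq ?_
        rw [card_erase_of_mem (mem_univ m), card_univ, Fintype.card_fin, nsmul_eq_mul,
          Nat.cast_pred m.pos]

lemma eventually_two_rpow_neg_mul_le {c ε : ℝ} (hc : 0 < c) (hε : 0 < ε) :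
    ∀ᶠ n : ℕ in atTop, (2 : ℝ) ^ (-(n * c)) ≤ ε := by
  have hlt : (2 : ℝ) ^ (-c) < 1 := Real.rpow_lt_one_of_one_lt_of_neg one_lt_two (neg_neg_of_pos hc)
  filter_upwards [(tendsto_pow_atTop_nhds_zero_of_lt_one (by positivity) hlt).eventually_le_const
    hε] with n hn
  rwa [← Real.rpow_natCast, ← Real.rpow_mul zero_le_two, neg_mul, mul_comm] at hn

lemma IsDist.eventually_hasRandomCode {A ι : Type*} [Fintype A] [Fintype ι] [DecidableEq ι]
    {P : A → ℝ} (hP : IsDist P) {W : A → Matrix ι ι ℂ} (hW : ∀ a, IsState (W a)) {δ ε : ℝ}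
    (hδ : 0 < δ) (hε : 0 < ε) :
    ∀ᶠ n : ℕ in atTop, HasRandomCode (iidDist P) (cqPow W n)
      ⌈2 * (2 : ℝ) ^ (n * (holevo P W - δ))⌉₊ ε := by
  set H := mean P fun a => vnEntropy (W a)
  set S := vnEntropy (mixedState P W)
  have hη : 0 < δ / 4 := by positivity
  have hε' : 0 < ε / 34 := by positivity
  filter_upwards [hP.eventually_exists_conditionallyTypicalProj hW hη hε',
    (hP.isState_mixedState hW).eventually_exists_typicalProj hη hε',
    eventually_two_rpow_neg_mul_le (half_pos hδ) (show 0 < ε / 16 by positivity)]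
  rintro n ⟨Q, hQ, hQtrace, -, hQerr⟩ ⟨R, hR, hRle, hRerr⟩ hn
  rw [← mixedState_cqPow] at hRle hRerr
  set r : ℝ := (2 : ℝ) ^ (n * (holevo P W - δ))
  set t : ℝ := (2 : ℝ) ^ (-(n * (S - δ / 4)))
  set d : ℝ := (2 : ℝ) ^ (n * (H + δ / 4))
  refine ((isDist_prodDist fun _ => hP).hasRandomCode (cqPow_nonneg fun a => (hW a).1) hQ hR
    (by positivity) hRerr hQerr hQtrace hRle _).mono ?_
  have hceil : (⌈2 * r⌉₊ : ℝ) - 1 ≤ 2 * r :=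
    sub_le_iff_le_add.2 (Nat.ceil_lt_add_one (by positivity)).le
  have hexponent : r * (t * d) = 2 ^ (-(n * (δ / 2))) := by
    rw [← Real.rpow_add two_pos, ← Real.rpow_add two_pos]
    congr 1
    change n * (S - H - δ) + _ = _
    ring
  have hcross : ((⌈2 * r⌉₊ : ℝ) - 1) * (t * d) ≤ ε / 8 := by
    calc ((⌈2 * r⌉₊ : ℝ) - 1) * (t * d) ≤ 2 * r * (t * d) := by gcongr
      _ = 2 * 2 ^ (-(n * (δ / 2))) := by rw [mul_assoc, hexponent]
      _ ≤ ε / 8 := by linarith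
  linarith

end RandomCoding

/-! ### Expurgation -/

section Expurgation

variable {J K J₁ J₂ : ℕ}

lemma exists_embedding_forall_le_two_mul {e : Fin J → ℝ} (he : ∀ j, 0 ≤ e j) {c : ℝ}
    (hc : 0 ≤ c) (hsum : ∑ j, e j ≤ J * c) :
    ∃ (K : ℕ) (g : Fin K ↪ Fin J), J ≤ 2 * K ∧ ∀ k, e (g k) ≤ 2 * c := by
  set good : Finset (Fin J) := {j | e j ≤ 2 * c}
  set bad : Finset (Fin J) := {j | ¬e j ≤ 2 * c}
  have hcard : #good + #bad = J := by
    rw [card_filter_add_card_filter_not, card_univ, Fintype.card_fin]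
  refine ⟨#good, (good.orderEmbOfFin rfl).toEmbedding, ?_,
    fun k => (mem_filter.1 (good.orderEmbOfFin_mem rfl k)).2⟩
  by_contra! hmany
  have hJbad : (J : ℝ) ≤ 2 * #bad := by exact_mod_cast (by lia : J ≤ 2 * #bad)
  have hbad : bad.Nonempty := card_pos.1 (by lia)
  have hlt : #bad * (2 * c) < ∑ j, e j :=
    calc #bad * (2 * c) = ∑ _j ∈ bad, 2 * c := by rw [sum_const, nsmul_eq_mul]
      _ < ∑ j ∈ bad, e j := sum_lt_sum_of_nonempty hbad fun j hj => not_le.1 (mem_filter.1 hj).2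
      _ ≤ ∑ j, e j := sum_le_univ_sum_of_nonneg he
  linarith [mul_le_mul_of_nonneg_right hJbad hc]

lemma inv_mul_sum_comp_embedding_le (hJK : J ≤ 2 * K) (g : Fin K ↪ Fin J) {f : Fin J → ℝ}
    (hf : ∀ j, 0 ≤ f j) {c : ℝ} (hc : 0 ≤ c) (hsum : ∑ j, f j ≤ J * c) :
    (K : ℝ)⁻¹ * ∑ k, f (g k) ≤ 2 * c := by
  have hJK' : (J : ℝ) ≤ K * 2 := by exact_mod_cast hJK.trans_eq (mul_comm 2 K)
  refine inv_mul_le_of_le_mul₀ (by positivity) (by positivity) ?_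
  calc ∑ k, f (g k) = ∑ j ∈ univ.map g, f j := (sum_map univ g f).symm
    _ ≤ ∑ j, f j := sum_le_univ_sum_of_nonneg hf
    _ ≤ J * c := hsum
    _ ≤ K * 2 * c := by gcongr
    _ = K * (2 * c) := mul_assoc _ _ _

-- Columns are kept according to `f₁` and rows according to `f₂`; shrinking a sum of nonnegative
-- terms to half of its range at most doubles the average.
lemma exists_embeddings_forall_average_le {f₁ f₂ : Fin J₁ × Fin J₂ → ℝ} (hf₁ : ∀ p, 0 ≤ f₁ p)
    (hf₂ : ∀ p, 0 ≤ f₂ p) {c : ℝ} (hc : 0 ≤ c) (hsum₁ : ∑ p, f₁ p ≤ J₁ * J₂ * c)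
    (hsum₂ : ∑ p, f₂ p ≤ J₁ * J₂ * c) :
    ∃ (K₁ K₂ : ℕ) (g₁ : Fin K₁ ↪ Fin J₁) (g₂ : Fin K₂ ↪ Fin J₂), J₁ ≤ 2 * K₁ ∧ J₂ ≤ 2 * K₂ ∧
      (∀ b, (K₁ : ℝ)⁻¹ * ∑ a, f₁ (g₁ a, g₂ b) ≤ 4 * c) ∧
      ∀ a, (K₂ : ℝ)⁻¹ * ∑ b, f₂ (g₁ a, g₂ b) ≤ 4 * c := by
  rw [Fintype.sum_prod_type_right, mul_comm (J₁ : ℝ), mul_assoc] at hsum₁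
  rw [Fintype.sum_prod_type, mul_assoc] at hsum₂
  obtain ⟨K₂, g₂, hK₂, hcol⟩ := exists_embedding_forall_le_two_mul
    (fun b => sum_nonneg fun a _ => hf₁ (a, b)) (by positivity) hsum₁
  obtain ⟨K₁, g₁, hK₁, hrow⟩ := exists_embedding_forall_le_two_mul
    (fun a => sum_nonneg fun b _ => hf₂ (a, b)) (by positivity) hsum₂
  refine ⟨K₁, K₂, g₁, g₂, hK₁, hK₂, fun b => ?_, fun a => ?_⟩
  · convert inv_mul_sum_comp_embedding_le hK₁ g₁ (fun a => hf₁ (a, g₂ b))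
      (show 0 ≤ 2 * c by positivity) ((hcol b).trans_eq (mul_left_comm _ _ _)) using 1
    ring
  · convert inv_mul_sum_comp_embedding_le hK₂ g₂ (fun b => hf₂ (g₁ a, b))
      (show 0 ≤ 2 * c by positivity) ((hrow a).trans_eq (mul_left_comm _ _ _)) using 1
    ring

end Expurgation

section BroadcastCode

variable {X : Type*} [Fintype X] {J₁ J₂ : ℕ}

-- In an i.i.d. array of codewords every column is a random codebook for user 1 and every row one
-- for user 2, so the two errors can be controlled simultaneously.
lemma IsDist.exists_codebook {q : X → ℝ} (hq : IsDist q) {F₁ : (Fin J₁ → X) → Fin J₁ → ℝ}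
    {F₂ : (Fin J₂ → X) → Fin J₂ → ℝ} {η : ℝ}
    (h₁ : ∀ m, mean (iidDist q) (F₁ · m) ≤ η) (h₂ : ∀ m, mean (iidDist q) (F₂ · m) ≤ η) :
    ∃ w : Fin J₁ × Fin J₂ → X,
      ∑ p : Fin J₁ × Fin J₂, (F₁ (fun i => w (i, p.2)) p.1 + F₂ (fun i => w (p.1, i)) p.2) ≤
        J₁ * J₂ * (2 * η) := by
  refine (isDist_prodDist fun _ => hq).exists_le_of_mean_le ?_
  rw [mean_sum]
  refine (sum_le_card_nsmul _ _ (2 * η) fun p _ => ?_).trans_eq ?_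
  · rw [mean_add, two_mul]
    gcongr
    · rw [mean_prodDist_comp (fun _ => hq) (Prod.mk_left_injective p.2) (F₁ · p.1)]
      exact h₁ p.1
    · rw [mean_prodDist_comp (fun _ => hq) (Prod.mk_right_injective p.1) (F₂ · p.2)]
      exact h₂ p.2
  · simp

lemma IsDist.exists_broadcastCode {A ι₁ ι₂ : Type*} [Fintype A] [Fintype ι₁] [DecidableEq ι₁]
    [Fintype ι₂] [DecidableEq ι₂] {W₁ : A → Matrix ι₁ ι₁ ℂ} {W₂ : A → Matrix ι₂ ι₂ ℂ}
    (hW₁ : ∀ a, (W₁ a).PosSemidef) (hW₂ : ∀ a, (W₂ a).PosSemidef) {n : ℕ}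
    {q : (Fin n → A) → ℝ} (hq : IsDist q) {η : ℝ} (hη : 0 ≤ η)
    (h₁ : HasRandomCode q (cqPow W₁ n) J₁ η) (h₂ : HasRandomCode q (cqPow W₂ n) J₂ η) :
    ∃ K₁ K₂ : ℕ, J₁ ≤ 2 * K₁ ∧ J₂ ≤ 2 * K₂ ∧
      BroadcastCodeExists W₁ W₂ n K₁ K₂ (8 * η) (8 * η) := by
  obtain ⟨D₁, hD₁, herr₁⟩ := h₁
  obtain ⟨D₂, hD₂, herr₂⟩ := h₂
  obtain ⟨w, hw⟩ := hq.exists_codebook herr₁ herr₂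
  set f₁ : Fin J₁ × Fin J₂ → ℝ := fun p =>
    bornProb (cqPow W₁ n (w p)) (1 - D₁ (fun i => w (i, p.2)) p.1)
  set f₂ : Fin J₁ × Fin J₂ → ℝ := fun p =>
    bornProb (cqPow W₂ n (w p)) (1 - D₂ (fun i => w (p.1, i)) p.2)
  have hf₁ (p) : 0 ≤ f₁ p := (hD₁ _).bornProb_one_sub_nonneg (cqPow_nonneg hW₁ _) _
  have hf₂ (p) : 0 ≤ f₂ p := (hD₂ _).bornProb_one_sub_nonneg (cqPow_nonneg hW₂ _) _
  have hw' : ∑ p, f₁ p + ∑ p, f₂ p ≤ J₁ * J₂ * (2 * η) := by rwa [← sum_add_distrib]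
  obtain ⟨K₁, K₂, g₁, g₂, hK₁, hK₂, havg₁, havg₂⟩ := exists_embeddings_forall_average_le hf₁ hf₂
    (show 0 ≤ 2 * η by positivity)
    ((le_add_of_nonneg_right (sum_nonneg fun p _ => hf₂ p)).trans hw')
    ((le_add_of_nonneg_left (sum_nonneg fun p _ => hf₁ p)).trans hw')
  rw [← mul_assoc, show (4 * 2 : ℝ) = 8 by norm_num] at havg₁ havg₂
  exact ⟨K₁, K₂, hK₁, hK₂, fun m => w (g₁ m.1, g₂ m.2),
    fun b a => D₁ (fun i => w (i, g₂ b)) (g₁ a), fun a b => D₂ (fun i => w (g₁ a, i)) (g₂ b),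
    fun b => (hD₁ _).comp_embedding g₁, fun a => (hD₂ _).comp_embedding g₂, havg₁, havg₂⟩

lemma le_one_div_mul_logb_of_ceil_le {n K : ℕ} (hn : 0 < n) {r : ℝ}
    (hK : ⌈2 * (2 : ℝ) ^ (n * r)⌉₊ ≤ 2 * K) : r ≤ 1 / n * Real.logb 2 K := by
  have hpow : (2 : ℝ) ^ (n * r) ≤ K := by
    have h : 2 * (2 : ℝ) ^ (n * r) ≤ 2 * K := by exact_mod_cast Nat.ceil_le.1 hK
    exact le_of_mul_le_mul_left h two_pos
  have hlog : n * r ≤ Real.logb 2 K :=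
    (Real.le_logb_iff_rpow_le one_lt_two (lt_of_lt_of_le (by positivity) hpow)).2 hpow
  rw [one_div_mul_eq_div]
  exact (le_div_iff₀' (by positivity)).2 hlog

end BroadcastCode

/-- Achievability part of the broadcast-phase capacity theorem. -/
theorem broadcast_phase_achievability
    {A ι₁ ι₂ : Type*} [Fintype A] [Fintype ι₁] [DecidableEq ι₁] [Fintype ι₂] [DecidableEq ι₂]
    (W1 : A → Matrix ι₁ ι₁ ℂ) (W2 : A → Matrix ι₂ ι₂ ℂ)
    (hW1 : ∀ a, IsState (W1 a)) (hW2 : ∀ a, IsState (W2 a))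
    (P : A → ℝ) (hP : IsDist P)
    (ε δ : ℝ) (hε : 0 < ε) (hδ : 0 < δ) :
    ∃ N : ℕ, ∀ n : ℕ, N ≤ n →
      ∃ J1 J2 : ℕ, 1 ≤ J1 ∧ 1 ≤ J2 ∧
        holevo P W1 - δ ≤ (1 / n : ℝ) * Real.logb 2 J1 ∧
        holevo P W2 - δ ≤ (1 / n : ℝ) * Real.logb 2 J2 ∧
        BroadcastCodeExists W1 W2 n J1 J2 ε ε := by
  have hη : 0 < ε / 8 := by positivity
  refine eventually_atTop.1 ?_
  filter_upwards [eventually_gt_atTop 0, hP.eventually_hasRandomCode hW1 hδ hη,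
    hP.eventually_hasRandomCode hW2 hδ hη] with n hn hcode₁ hcode₂
  obtain ⟨K₁, K₂, hK₁, hK₂, hcode⟩ := (isDist_prodDist fun _ => hP).exists_broadcastCode
    (fun a => (hW1 a).1) (fun a => (hW2 a).1) hη.le hcode₁ hcode₂
  rw [mul_div_cancel₀ ε (by norm_num : (8 : ℝ) ≠ 0)] at hcode
  have hceil (r : ℝ) : 0 < ⌈2 * (2 : ℝ) ^ r⌉₊ := Nat.ceil_pos.2 (by positivity)
  exact ⟨K₁, K₂, by have := hceil (n * (holevo P W1 - δ)); lia,
    by have := hceil (n * (holevo P W2 - δ)); lia,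
    le_one_div_mul_logb_of_ceil_le hn hK₁, le_one_div_mul_logb_of_ceil_le hn hK₂, hcode⟩
end

section
/- Converse part of the broadcast-phase capacity theorem: Let W₁ : A → S(H₁) and W₂ : A → S(H₂) be classical-quantum channels with a common finite input alphabet A. Suppose the pair of nonnegative reals (R₁, R₂) is achievable, i.e., for every ε > 0 and δ > 0 and all sufficiently large n there exists an (n, J₁, J₂) bidirectional broadcast code with (1/n)·log₂ J₁ ≥ R₁ − δ, (1/n)·log₂ J₂ ≥ R₂ − δ, and average errors e₁ ≤ ε and e₂ ≤ ε. Then R₁ ≤ limsup_{n→∞} (1/n)·max_{P⁽ⁿ⁾} χ(P⁽ⁿ⁾; W₁^{⊗n}) and R₂ ≤ limsup_{n→∞} (1/n)·max_{P⁽ⁿ⁾} χ(P⁽ⁿ⁾; W₂^{⊗n}), where the maxima range over probability distributions P⁽ⁿ⁾ on Aⁿ and W_i^{⊗n} is regarded as a cq channel with input alphabet Aⁿ. -/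
open scoped BigOperators ComplexOrder

/-!
A broadcast code yields an ordinary code for each receiver by fixing the message which that
receiver already knows, so it is enough to bound `log₂ J` for a single cq channel by its Holevo
quantity under the uniform distribution on the codewords. That quantity is the average relative
entropy of the codeword states `ρ_m` to their mixture `σ`.

Written in the eigenbases `u_i` of `ρ` and `v_j` of `σ`, the relative entropy `D(ρ‖σ)` is the
classical divergence of the Nussbaum–Szkoła distributions `p_i |⟨u_i, v_j⟩|²` and
`q_j |⟨u_i, v_j⟩|²`, and the overlap `∑ min (p_i, t q_j) |⟨u_i, v_j⟩|²` of these two bounds from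
below, up to a factor `2`, the error `tr ((1 - T) ρ) + t tr (T σ)` of every test `T`. The decoding
operators are such tests, with `tr (D_m σ)` equal to `1 / J` at most on average, so taking
`t = ε J` forces the divergence to be at least `(1 - 4 ε) log₂ (ε J) - O(1)`. The loss is
`o(n)` as `n → ∞` and then `ε → 0`.
-/

section Trace

open Matrix MatrixOrder

variable {ι : Type*} [Fintype ι]

lemma exists_eq_conjTranspose_mul_self {S : Matrix ι ι ℂ} (hS : S.PosSemidef) :
    ∃ B : Matrix ι ι ℂ, S = Bᴴ * B := by
  classical
  exact CStarAlgebra.nonneg_iff_eq_star_mul_self.mp hS.nonneg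

lemma trace_mul_re_nonneg {S T : Matrix ι ι ℂ} (hS : S.PosSemidef) (hT : T.PosSemidef) :
    0 ≤ (S * T).trace.re := by
  obtain ⟨B, rfl⟩ := exists_eq_conjTranspose_mul_self hS
  rw [Matrix.mul_assoc, trace_mul_comm]
  exact (Complex.le_def.mp (hT.mul_mul_conjTranspose_same B).trace_nonneg).1

variable [DecidableEq ι]

lemma posSemidef_sub_mul_self {T : Matrix ι ι ℂ} (hT : T.PosSemidef) (hT1 : loewnerLE T 1) :
    (T - T * T).PosSemidef := by
  have hsplit : T - T * T = T * (1 - T) * Tᴴ + (1 - T) * T * (1 - T)ᴴ := by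
    rw [hT.1.eq, hT1.1.eq]
    noncomm_ring
  rw [hsplit]
  exact (hT1.mul_mul_conjTranspose_same T).add (hT.mul_mul_conjTranspose_same (1 - T))

lemma trace_mul_self_mul_re_le {S T : Matrix ι ι ℂ} (hS : S.PosSemidef) (hT : T.PosSemidef)
    (hT1 : loewnerLE T 1) : (T * T * S).trace.re ≤ (T * S).trace.re := by
  have h := trace_mul_re_nonneg (posSemidef_sub_mul_self hT hT1) hS
  rwa [Matrix.sub_mul, trace_sub, Complex.sub_re, sub_nonneg] at h

end Trace

section Eigenbases

open Matrix

variable {ι : Type*} [Fintype ι] [DecidableEq ι] {ρ σ : Matrix ι ι ℂ}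

/-- The matrix `⟨u_i, X v_j⟩` of an operator `X` with respect to the eigenbasis `v` of `σ` on the
source and the eigenbasis `u` of `ρ` on the target. -/
noncomputable def eigenMatrix (hρ : ρ.IsHermitian) (hσ : σ.IsHermitian) :
    Matrix ι ι ℂ →ₗ[ℂ] Matrix ι ι ℂ :=
  LinearMap.mulLeftRight ℂ
    (star (hρ.eigenvectorUnitary : Matrix ι ι ℂ), (hσ.eigenvectorUnitary : Matrix ι ι ℂ))

/-- The squared overlaps `|⟨u_i, v_j⟩|²` of the eigenvectors of `ρ` with those of `σ`, the weights
from which the Nussbaum–Szkoła distributions of `ρ` and `σ` are formed. -/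
noncomputable def eigenOverlap (hρ : ρ.IsHermitian) (hσ : σ.IsHermitian) (i j : ι) : ℝ :=
  ‖eigenMatrix hρ hσ 1 i j‖ ^ 2

lemma eigenMatrix_apply (hρ : ρ.IsHermitian) (hσ : σ.IsHermitian) (X : Matrix ι ι ℂ) :
    eigenMatrix hρ hσ X =
      star (hρ.eigenvectorUnitary : Matrix ι ι ℂ) * X * hσ.eigenvectorUnitary :=
  LinearMap.mulLeftRight_apply _ _ X

lemma conjTranspose_eigenMatrix (hρ : ρ.IsHermitian) (hσ : σ.IsHermitian) (X : Matrix ι ι ℂ) :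
    (eigenMatrix hρ hσ X)ᴴ = eigenMatrix hσ hρ Xᴴ := by
  simp only [eigenMatrix_apply, star_eq_conjTranspose, conjTranspose_mul,
    conjTranspose_conjTranspose, Matrix.mul_assoc]

lemma eigenMatrix_mul_eigenMatrix {τ : Matrix ι ι ℂ} (hρ : ρ.IsHermitian) (hσ : σ.IsHermitian)
    (hτ : τ.IsHermitian) (X Y : Matrix ι ι ℂ) :
    eigenMatrix hρ hσ X * eigenMatrix hσ hτ Y = eigenMatrix hρ hτ (X * Y) := by
  simp only [eigenMatrix_apply, Matrix.mul_assoc]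
  rw [← Matrix.mul_assoc _ (star _), Unitary.mul_star_self_of_mem hσ.eigenvectorUnitary.2,
    Matrix.one_mul]

lemma eigenMatrix_self_one (hρ : ρ.IsHermitian) : eigenMatrix hρ hρ 1 = 1 := by
  rw [eigenMatrix_apply, Matrix.mul_one, Unitary.coe_star_mul_self]

lemma eigenMatrix_self (hρ : ρ.IsHermitian) :
    eigenMatrix hρ hρ ρ = diagonal fun i => (hρ.eigenvalues i : ℂ) := by
  have h := hρ.conjStarAlgAut_star_eigenvectorUnitary
  rwa [Unitary.conjStarAlgAut_star_apply, ← eigenMatrix_apply] at h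

lemma trace_eigenMatrix_self (hρ : ρ.IsHermitian) (X : Matrix ι ι ℂ) :
    (eigenMatrix hρ hρ X).trace = X.trace := by
  rw [eigenMatrix_apply, trace_mul_cycle,
    Unitary.mul_star_self_of_mem hρ.eigenvectorUnitary.2, Matrix.one_mul]

lemma eigenMatrix_mul_conjTranspose_apply_self (hρ : ρ.IsHermitian) (hσ : σ.IsHermitian)
    (X : Matrix ι ι ℂ) (i : ι) :
    (eigenMatrix hρ hρ (X * Xᴴ) i i).re = ∑ j, ‖eigenMatrix hρ hσ X i j‖ ^ 2 := by
  rw [← eigenMatrix_mul_eigenMatrix hρ hσ hρ, ← conjTranspose_eigenMatrix, mul_apply,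
    Complex.re_sum]
  refine Finset.sum_congr rfl fun j _ => ?_
  rw [conjTranspose_apply, Complex.star_def, Complex.mul_conj', ← Complex.ofReal_pow,
    Complex.ofReal_re]

lemma trace_mul_conjTranspose_mul_re (hρ : ρ.IsHermitian) (hσ : σ.IsHermitian)
    (X : Matrix ι ι ℂ) :
    (X * Xᴴ * ρ).trace.re =
      ∑ i, ∑ j, hρ.eigenvalues i * ‖eigenMatrix hρ hσ X i j‖ ^ 2 := by
  rw [← trace_eigenMatrix_self hρ, ← eigenMatrix_mul_eigenMatrix hρ hρ hρ, eigenMatrix_self, trace,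
    Complex.re_sum]
  refine Finset.sum_congr rfl fun i _ => ?_
  rw [diag_apply, mul_diagonal, Complex.re_mul_ofReal, ← Finset.mul_sum,
    eigenMatrix_mul_conjTranspose_apply_self hρ hσ, mul_comm]

lemma trace_conjTranspose_mul_mul_re (hρ : ρ.IsHermitian) (hσ : σ.IsHermitian)
    (X : Matrix ι ι ℂ) :
    (Xᴴ * X * σ).trace.re =
      ∑ i, ∑ j, hσ.eigenvalues j * ‖eigenMatrix hρ hσ X i j‖ ^ 2 := by
  have h := trace_mul_conjTranspose_mul_re hσ hρ Xᴴ
  rw [conjTranspose_conjTranspose] at h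
  rw [h, Finset.sum_comm]
  simp only [← conjTranspose_eigenMatrix, conjTranspose_apply, norm_star]

lemma eigenOverlap_nonneg (hρ : ρ.IsHermitian) (hσ : σ.IsHermitian) (i j : ι) :
    0 ≤ eigenOverlap hρ hσ i j :=
  sq_nonneg _

lemma eigenOverlap_comm (hρ : ρ.IsHermitian) (hσ : σ.IsHermitian) (i j : ι) :
    eigenOverlap hρ hσ i j = eigenOverlap hσ hρ j i := by
  rw [eigenOverlap, eigenOverlap, ← norm_star, ← conjTranspose_apply, conjTranspose_eigenMatrix,
    conjTranspose_one]

lemma sum_eigenOverlap_right (hρ : ρ.IsHermitian) (hσ : σ.IsHermitian) (i : ι) :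
    ∑ j, eigenOverlap hρ hσ i j = 1 := by
  have h := eigenMatrix_mul_conjTranspose_apply_self hρ hσ 1 i
  rw [conjTranspose_one, Matrix.mul_one, eigenMatrix_self_one, one_apply_eq, Complex.one_re] at h
  exact h.symm

lemma sum_eigenOverlap_left (hρ : ρ.IsHermitian) (hσ : σ.IsHermitian) (j : ι) :
    ∑ i, eigenOverlap hρ hσ i j = 1 := by
  simp only [eigenOverlap_comm hρ hσ, sum_eigenOverlap_right]

lemma sum_eigenOverlap_mul_eigenvalues (hρ : ρ.IsHermitian) (hσ : σ.IsHermitian) (j : ι) :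
    ∑ i, eigenOverlap hρ hσ i j * hρ.eigenvalues i = (eigenMatrix hσ hσ ρ j j).re := by
  have hfactor : eigenMatrix hσ hσ ρ =
      eigenMatrix hσ hρ 1 * eigenMatrix hρ hρ ρ * (eigenMatrix hσ hρ 1)ᴴ := by
    rw [conjTranspose_eigenMatrix, conjTranspose_one, eigenMatrix_mul_eigenMatrix,
      eigenMatrix_mul_eigenMatrix, Matrix.one_mul, Matrix.mul_one]
  rw [hfactor, eigenMatrix_self, mul_apply, Complex.re_sum]
  refine Finset.sum_congr rfl fun i _ => ?_
  rw [mul_diagonal, conjTranspose_apply, mul_right_comm, Complex.star_def, Complex.mul_conj',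
    ← Complex.ofReal_pow, ← Complex.ofReal_mul, Complex.ofReal_re, eigenOverlap_comm, eigenOverlap]

end Eigenbases

section RelativeEntropy

open Matrix Real

variable {ι : Type*} [Fintype ι] [DecidableEq ι] {ρ σ T : Matrix ι ι ℂ}

lemma min_mul_norm_add_sq_le {E : Type*} [SeminormedAddCommGroup E] {a b : ℝ} (ha : 0 ≤ a)
    (hb : 0 ≤ b) (x y : E) :
    min a b * ‖x + y‖ ^ 2 ≤ 2 * (a * ‖x‖ ^ 2 + b * ‖y‖ ^ 2) :=
  calc min a b * ‖x + y‖ ^ 2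
      ≤ min a b * (2 * (‖x‖ ^ 2 + ‖y‖ ^ 2)) := by
        gcongr
        calc ‖x + y‖ ^ 2 ≤ (‖x‖ + ‖y‖) ^ 2 := by gcongr; exact norm_add_le x y
          _ ≤ 2 * (‖x‖ ^ 2 + ‖y‖ ^ 2) := add_sq_le
    _ = 2 * (min a b * ‖x‖ ^ 2 + min a b * ‖y‖ ^ 2) := by ring
    _ ≤ 2 * (a * ‖x‖ ^ 2 + b * ‖y‖ ^ 2) := by
        gcongr
        · exact min_le_left a b
        · exact min_le_right a b

/-- The **Nussbaum–Szkoła inequality**: `1 = (1 - T) + T` is split inside each overlap. -/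
lemma sum_eigenOverlap_mul_min_le (hρ : ρ.PosSemidef) (hσ : σ.PosSemidef) (hT : T.PosSemidef)
    (hT1 : loewnerLE T 1) {t : ℝ} (ht : 0 ≤ t) :
    ∑ i, ∑ j, eigenOverlap hρ.1 hσ.1 i j * min (hρ.1.eigenvalues i) (t * hσ.1.eigenvalues j) ≤
      2 * (((1 - T) * ρ).trace.re + t * (T * σ).trace.re) := by
  have hsplit : eigenMatrix hρ.1 hσ.1 1 =
      eigenMatrix hρ.1 hσ.1 (1 - T) + eigenMatrix hρ.1 hσ.1 T := by
    rw [← map_add, sub_add_cancel]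
  have hcompl : loewnerLE (1 - T) 1 := by rwa [loewnerLE, sub_sub_cancel]
  have hfst : ∑ i, ∑ j, hρ.1.eigenvalues i * ‖eigenMatrix hρ.1 hσ.1 (1 - T) i j‖ ^ 2 ≤
      ((1 - T) * ρ).trace.re := by
    rw [← trace_mul_conjTranspose_mul_re, hT1.1.eq]
    exact trace_mul_self_mul_re_le hρ hT1 hcompl
  have hsnd : ∑ i, ∑ j, hσ.1.eigenvalues j * ‖eigenMatrix hρ.1 hσ.1 T i j‖ ^ 2 ≤
      (T * σ).trace.re := by
    rw [← trace_conjTranspose_mul_mul_re, hT.1.eq]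
    exact trace_mul_self_mul_re_le hσ hT hT1
  calc ∑ i, ∑ j, eigenOverlap hρ.1 hσ.1 i j * min (hρ.1.eigenvalues i) (t * hσ.1.eigenvalues j)
      ≤ ∑ i, ∑ j, 2 * (hρ.1.eigenvalues i * ‖eigenMatrix hρ.1 hσ.1 (1 - T) i j‖ ^ 2 +
          t * hσ.1.eigenvalues j * ‖eigenMatrix hρ.1 hσ.1 T i j‖ ^ 2) := by
        refine Finset.sum_le_sum fun i _ => Finset.sum_le_sum fun j _ => ?_
        rw [eigenOverlap, hsplit, Matrix.add_apply, mul_comm]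
        exact min_mul_norm_add_sq_le (hρ.eigenvalues_nonneg i)
          (mul_nonneg ht (hσ.eigenvalues_nonneg j)) _ _
    _ = 2 * (∑ i, ∑ j, hρ.1.eigenvalues i * ‖eigenMatrix hρ.1 hσ.1 (1 - T) i j‖ ^ 2 +
          t * ∑ i, ∑ j, hσ.1.eigenvalues j * ‖eigenMatrix hρ.1 hσ.1 T i j‖ ^ 2) := by
        simp only [Finset.mul_sum, Finset.sum_add_distrib, mul_add, mul_assoc]
    _ ≤ 2 * (((1 - T) * ρ).trace.re + t * (T * σ).trace.re) := by gcongr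

/-- The quantum relative entropy `D(ρ‖σ) = tr ρ (log₂ ρ - log₂ σ)`, written out in the eigenbases
of `ρ` and `σ`. Because `logb 2 0 = 0`, it is a junk value instead of `∞` when the support of `ρ`
is not contained in that of `σ`. -/
noncomputable def relEntropy (hρ : ρ.IsHermitian) (hσ : σ.IsHermitian) : ℝ :=
  ∑ i, ∑ j, eigenOverlap hρ hσ i j *
    (hρ.eigenvalues i * (logb 2 (hρ.eigenvalues i) - logb 2 (hσ.eigenvalues j)))

lemma sub_min_mul_logb_sub_le {p q t : ℝ} (hp : 0 ≤ p) (hq : 0 < q) (ht : 1 ≤ t) :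
    (p - min p (t * q)) * logb 2 t - q / log 2 ≤ p * (logb 2 p - logb 2 q) := by
  have hlogt : 0 ≤ logb 2 t := logb_nonneg one_lt_two ht
  have hq_div : 0 ≤ q / log 2 := by positivity
  rcases hp.eq_or_lt with rfl | hp
  · rw [min_eq_left (by positivity)]
    simpa using hq_div
  rcases le_total (t * q) p with hlarge | hsmall
  · have hlog : logb 2 t ≤ logb 2 p - logb 2 q := by
      rw [le_sub_iff_add_le, ← logb_mul (by positivity) hq.ne']
      exact logb_le_logb_of_le one_lt_two (by positivity) hlarge
    calc (p - min p (t * q)) * logb 2 t - q / log 2 ≤ p * logb 2 t := by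
          have : 0 ≤ min p (t * q) * logb 2 t := by positivity
          linarith
      _ ≤ p * (logb 2 p - logb 2 q) := by gcongr
  · have hlog : log q - log p ≤ q / p - 1 := by
      rw [← log_div hq.ne' hp.ne']
      exact log_le_sub_one_of_pos (by positivity)
    have hgap : p * (log q - log p) ≤ q := by
      calc p * (log q - log p) ≤ p * (q / p - 1) := by gcongr
        _ = q - p := by field_simp
        _ ≤ q := by linarith
    calc (p - min p (t * q)) * logb 2 t - q / log 2 = -(q / log 2) := by
          rw [min_eq_left hsmall]
          ring
      _ ≤ -(p * (log q - log p) / log 2) := by gcongr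
      _ = p * (logb 2 p - logb 2 q) := by
          rw [logb, logb]
          ring

lemma eigenOverlap_mul_eigenvalues_eq_zero (hρ : ρ.PosSemidef) (hσ : σ.IsHermitian) {c : ℝ}
    (hc : 0 < c) (hle : loewnerLE ((c : ℂ) • ρ) σ) {i j : ι} (hj : hσ.eigenvalues j = 0) :
    eigenOverlap hρ.1 hσ i j * hρ.1.eigenvalues i = 0 := by
  have hterm : ∀ k, 0 ≤ eigenOverlap hρ.1 hσ k j * hρ.1.eigenvalues k := fun k =>
    mul_nonneg (eigenOverlap_nonneg _ _ _ _) (hρ.eigenvalues_nonneg k)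
  have hgap : 0 ≤ (eigenMatrix hσ hσ (σ - (c : ℂ) • ρ) j j).re := by
    rw [eigenMatrix_apply]
    exact (Complex.le_def.mp (hle.conjTranspose_mul_mul_same _).diag_nonneg).1
  rw [map_sub, map_smul, eigenMatrix_self, Matrix.sub_apply, diagonal_apply_eq, hj,
    Matrix.smul_apply, smul_eq_mul, Complex.sub_re, Complex.ofReal_re, Complex.re_ofReal_mul,
    zero_sub, ← sum_eigenOverlap_mul_eigenvalues hρ.1] at hgap
  have hsum : ∑ k, eigenOverlap hρ.1 hσ k j * hρ.1.eigenvalues k = 0 :=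
    le_antisymm (nonpos_of_mul_nonpos_right (neg_nonneg.mp hgap) hc)
      (Finset.sum_nonneg fun k _ => hterm k)
  exact (Finset.sum_eq_zero_iff_of_nonneg fun k _ => hterm k).mp hsum i (Finset.mem_univ i)

lemma IsState.sum_eigenvalues (hρ : IsState ρ) : ∑ i, hρ.1.1.eigenvalues i = 1 := by
  have h := congrArg Complex.re (hρ.1.1.trace_eq_sum_eigenvalues.symm.trans hρ.2)
  rwa [Complex.re_sum, Complex.one_re] at h

lemma sub_sum_min_mul_logb_sub_le_relEntropy (hρ : IsState ρ) (hσ : IsState σ) {c t : ℝ}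
    (hc : 0 < c) (hle : loewnerLE ((c : ℂ) • ρ) σ) (ht : 1 ≤ t) :
    (1 - ∑ i, ∑ j, eigenOverlap hρ.1.1 hσ.1.1 i j *
        min (hρ.1.1.eigenvalues i) (t * hσ.1.1.eigenvalues j)) * logb 2 t - 1 / log 2 ≤
      relEntropy hρ.1.1 hσ.1.1 := by
  set w := eigenOverlap hρ.1.1 hσ.1.1
  set p := hρ.1.1.eigenvalues
  set q := hσ.1.1.eigenvalues
  have hp_sum : ∑ i, ∑ j, w i j * p i = 1 := by
    simp only [← Finset.sum_mul, w, sum_eigenOverlap_right, one_mul]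
    exact hρ.sum_eigenvalues
  have hq_sum : ∑ i, ∑ j, w i j * q j = 1 := by
    rw [Finset.sum_comm]
    simp only [← Finset.sum_mul, w, sum_eigenOverlap_left, one_mul]
    exact hσ.sum_eigenvalues
  have hpointwise : ∀ i j, w i j * ((p i - min (p i) (t * q j)) * logb 2 t - q j / log 2) ≤
      w i j * (p i * (logb 2 (p i) - logb 2 (q j))) := by
    intro i j
    rcases (hσ.1.eigenvalues_nonneg j).eq_or_lt with hq | hq
    · have hwp : w i j * p i = 0 := eigenOverlap_mul_eigenvalues_eq_zero hρ.1 hσ.1.1 hc hle hq.symm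
      rcases mul_eq_zero.mp hwp with h | h <;> simp [h, q, ← hq]
    · exact mul_le_mul_of_nonneg_left
        (sub_min_mul_logb_sub_le (hρ.1.eigenvalues_nonneg i) hq ht) (eigenOverlap_nonneg _ _ _ _)
  calc (1 - ∑ i, ∑ j, w i j * min (p i) (t * q j)) * logb 2 t - 1 / log 2
      = (∑ i, ∑ j, w i j * p i - ∑ i, ∑ j, w i j * min (p i) (t * q j)) * logb 2 t -
          (∑ i, ∑ j, w i j * q j) / log 2 := by rw [hp_sum, hq_sum]
    _ = ∑ i, ∑ j, w i j * ((p i - min (p i) (t * q j)) * logb 2 t - q j / log 2) := by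
        simp only [mul_sub, sub_mul, Finset.sum_sub_distrib, Finset.sum_mul, Finset.sum_div,
          mul_assoc, mul_div_assoc]
    _ ≤ relEntropy hρ.1.1 hσ.1.1 :=
        Finset.sum_le_sum fun i _ => Finset.sum_le_sum fun j _ => hpointwise i j

lemma one_sub_test_error_mul_logb_sub_le_relEntropy (hρ : IsState ρ) (hσ : IsState σ) {c t : ℝ}
    (hc : 0 < c) (hle : loewnerLE ((c : ℂ) • ρ) σ) (hT : T.PosSemidef) (hT1 : loewnerLE T 1)
    (ht : 1 ≤ t) :
    (1 - 2 * (((1 - T) * ρ).trace.re + t * (T * σ).trace.re)) * logb 2 t - 1 / log 2 ≤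
      relEntropy hρ.1.1 hσ.1.1 := by
  have hlogt : 0 ≤ logb 2 t := logb_nonneg one_lt_two ht
  refine le_trans ?_ (sub_sum_min_mul_logb_sub_le_relEntropy hρ hσ hc hle ht)
  gcongr
  exact sum_eigenOverlap_mul_min_le hρ.1 hσ.1 hT hT1 (zero_le_one.trans ht)

end RelativeEntropy

section Holevo

open Matrix Real

variable {ι M : Type*} [Fintype ι] [Fintype M] {ρ σ : Matrix ι ι ℂ}

lemma IsState.nonempty (hρ : IsState ρ) : Nonempty ι := by
  by_contra hempty
  rw [not_nonempty_iff] at hempty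
  exact zero_ne_one ((trace_eq_zero_of_isEmpty ρ).symm.trans hρ.2)

lemma isState_sum_smul {P : M → ℝ} (hP : IsDist P) {W : M → Matrix ι ι ℂ}
    (hW : ∀ m, IsState (W m)) : IsState (∑ m, (P m : ℂ) • W m) := by
  refine ⟨posSemidef_sum _ fun m _ => (hW m).1.smul (Complex.zero_le_real.mpr (hP.1 m)), ?_⟩
  simp only [trace_sum, trace_smul, (hW _).2, smul_eq_mul, mul_one]
  exact_mod_cast hP.2

lemma loewnerLE_sum {X : M → Matrix ι ι ℂ} (hX : ∀ m, (X m).PosSemidef) (m : M) :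
    loewnerLE (X m) (∑ k, X k) := by
  classical
  rw [loewnerLE, ← Finset.sum_erase_eq_sub (Finset.mem_univ m)]
  exact posSemidef_sum _ fun k _ => hX k

lemma isDist_uniform [Nonempty M] : IsDist fun _ : M => (Fintype.card M : ℝ)⁻¹ :=
  ⟨fun _ => by positivity, by simp⟩

variable [DecidableEq ι]

lemma vnEntropy_eq_neg_sum (hρ : ρ.IsHermitian) :
    vnEntropy ρ = -∑ i, hρ.eigenvalues i * logb 2 (hρ.eigenvalues i) :=
  dif_pos hρ

lemma relEntropy_eq_neg_vnEntropy_sub (hρ : ρ.IsHermitian) (hσ : σ.IsHermitian) :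
    relEntropy hρ hσ = -vnEntropy ρ -
      ∑ j, (eigenMatrix hσ hσ ρ j j).re * logb 2 (hσ.eigenvalues j) := by
  have hself : ∑ i, ∑ j, eigenOverlap hρ hσ i j *
      (hρ.eigenvalues i * logb 2 (hρ.eigenvalues i)) = -vnEntropy ρ := by
    simp only [← Finset.sum_mul, sum_eigenOverlap_right, one_mul, vnEntropy_eq_neg_sum hρ, neg_neg]
  have hcross : ∑ i, ∑ j, eigenOverlap hρ hσ i j *
      (hρ.eigenvalues i * logb 2 (hσ.eigenvalues j)) =
      ∑ j, (eigenMatrix hσ hσ ρ j j).re * logb 2 (hσ.eigenvalues j) := by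
    rw [Finset.sum_comm]
    simp only [← mul_assoc, ← Finset.sum_mul, sum_eigenOverlap_mul_eigenvalues]
  simp only [relEntropy, mul_sub, Finset.sum_sub_distrib, hself, hcross]

lemma holevo_eq_sum_mul_relEntropy (P : M → ℝ) {W : M → Matrix ι ι ℂ}
    (hW : ∀ m, (W m).IsHermitian) (hmix : (∑ m, (P m : ℂ) • W m).IsHermitian) :
    holevo P W = ∑ m, P m * relEntropy (hW m) hmix := by
  have hdiag : ∀ j, hmix.eigenvalues j = ∑ m, P m * (eigenMatrix hmix hmix (W m) j j).re := by
    intro j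
    have h := congrArg (fun X => (X j j).re) (eigenMatrix_self hmix)
    simpa only [map_sum, map_smul, Matrix.sum_apply, Matrix.smul_apply, smul_eq_mul,
      Complex.re_sum, Complex.re_ofReal_mul, diagonal_apply_eq, Complex.ofReal_re] using h.symm
  have hmixture : vnEntropy (∑ m, (P m : ℂ) • W m) = -∑ m, P m *
      ∑ j, (eigenMatrix hmix hmix (W m) j j).re * logb 2 (hmix.eigenvalues j) := by
    rw [vnEntropy_eq_neg_sum hmix]
    simp only [Finset.mul_sum, ← mul_assoc]
    rw [Finset.sum_comm]
    simp only [← Finset.sum_mul, ← hdiag]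
  simp only [holevo, hmixture, relEntropy_eq_neg_vnEntropy_sub, mul_sub, mul_neg,
    Finset.sum_sub_distrib, Finset.sum_neg_distrib]
  ring

lemma IsPOVM.loewnerLE_one {D : M → Matrix ι ι ℂ} (hD : IsPOVM D) (m : M) :
    loewnerLE (D m) 1 := by
  rw [loewnerLE, ← sub_add_sub_cancel 1 (∑ k, D k) (D m)]
  exact hD.2.add (loewnerLE_sum hD.1 m)

lemma IsPOVM.sum_trace_mul_re_le_one {D : M → Matrix ι ι ℂ} (hD : IsPOVM D) (hσ : IsState σ) :
    ∑ m, (D m * σ).trace.re ≤ 1 := by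
  have h := trace_mul_re_nonneg hD.2 hσ.1
  rwa [Matrix.sub_mul, Matrix.one_mul, trace_sub, hσ.2, Finset.sum_mul, trace_sum, Complex.sub_re,
    Complex.one_re, Complex.re_sum, sub_nonneg] at h

lemma one_sub_error_mul_logb_sub_le_holevo [Nonempty M] {W D : M → Matrix ι ι ℂ}
    (hW : ∀ m, IsState (W m)) (hD : IsPOVM D) {t : ℝ} (ht : 1 ≤ t) :
    (1 - 2 * ((Fintype.card M : ℝ)⁻¹ * ∑ m, ((1 - D m) * W m).trace.re +
        t * (Fintype.card M : ℝ)⁻¹)) * logb 2 t - 1 / log 2 ≤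
      holevo (fun _ => (Fintype.card M : ℝ)⁻¹) W := by
  set c : ℝ := (Fintype.card M : ℝ)⁻¹
  set σ : Matrix ι ι ℂ := ∑ m, (c : ℂ) • W m
  have hc_pos : 0 < c := inv_pos.mpr (Nat.cast_pos.mpr Fintype.card_pos)
  have hc_sum : ∑ _m : M, c = 1 := isDist_uniform.2
  have hσ : IsState σ := isState_sum_smul isDist_uniform hW
  have hle : ∀ m, loewnerLE ((c : ℂ) • W m) σ :=
    loewnerLE_sum fun m => (hW m).1.smul (Complex.zero_le_real.mpr hc_pos.le)
  have hlogt : 0 ≤ logb 2 t := logb_nonneg one_lt_two ht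
  calc (1 - 2 * (c * ∑ m, ((1 - D m) * W m).trace.re + t * c)) * logb 2 t - 1 / log 2
      ≤ (1 - 2 * (c * ∑ m, ((1 - D m) * W m).trace.re +
          t * (c * ∑ m, (D m * σ).trace.re))) * logb 2 t - 1 / log 2 := by
        gcongr
        exact mul_le_of_le_one_right hc_pos.le (hD.sum_trace_mul_re_le_one hσ)
    _ = ∑ m, c * ((1 - 2 * (((1 - D m) * W m).trace.re + t * (D m * σ).trace.re)) * logb 2 t -
          1 / log 2) := by
        simp only [mul_sub, sub_mul, mul_add, add_mul, Finset.sum_sub_distrib,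
          Finset.sum_add_distrib, ← Finset.sum_mul, ← Finset.mul_sum, hc_sum]
        ring
    _ ≤ ∑ m, c * relEntropy (hW m).1.1 hσ.1.1 := by
        gcongr with m
        exact one_sub_test_error_mul_logb_sub_le_relEntropy (hW m) hσ hc_pos (hle m) (hD.1 m)
          (hD.loewnerLE_one m) ht
    _ = holevo (fun _ => c) W :=
        (holevo_eq_sum_mul_relEntropy _ (fun m => (hW m).1.1) hσ.1.1).symm

end Holevo

section Capacity

open Matrix Real

variable {ι X M : Type*} [Fintype ι] [DecidableEq ι] [Fintype X] [Fintype M]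
  {W : X → Matrix ι ι ℂ}

/-- The Holevo capacity `max_P χ(P; W)` of a cq channel, as a supremum over input distributions. -/
noncomputable def holevoCapacity (W : X → Matrix ι ι ℂ) : ℝ :=
  sSup {x : ℝ | ∃ P : X → ℝ, IsDist P ∧ x = holevo P W}

/-- Existence of a code with `J` messages and average error at most `ε` for a single use of the
cq channel `W`. -/
def CodeExists (W : X → Matrix ι ι ℂ) (J : ℕ) (ε : ℝ) : Prop :=
  ∃ (f : Fin J → X) (D : Fin J → Matrix ι ι ℂ),
    IsPOVM D ∧ (J : ℝ)⁻¹ * ∑ m, ((1 - D m) * W (f m)).trace.re ≤ ε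

lemma vnEntropy_nonneg {ρ : Matrix ι ι ℂ} (hρ : IsState ρ) : 0 ≤ vnEntropy ρ := by
  rw [vnEntropy_eq_neg_sum hρ.1.1, neg_nonneg]
  refine Finset.sum_nonpos fun i _ => mul_nonpos_of_nonneg_of_nonpos (hρ.1.eigenvalues_nonneg i)
    (logb_nonpos one_lt_two (hρ.1.eigenvalues_nonneg i) ?_)
  rw [← hρ.sum_eigenvalues]
  exact Finset.single_le_sum (fun j _ => hρ.1.eigenvalues_nonneg j) (Finset.mem_univ i)

lemma vnEntropy_le_logb_card {ρ : Matrix ι ι ℂ} (hρ : IsState ρ) :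
    vnEntropy ρ ≤ logb 2 (Fintype.card ι) := by
  have := hρ.nonempty
  have hcard : (0 : ℝ) < Fintype.card ι := Nat.cast_pos.mpr Fintype.card_pos
  have hjensen := concaveOn_negMulLog.le_map_sum (t := Finset.univ)
    (w := fun _ : ι => (Fintype.card ι : ℝ)⁻¹) (fun i _ => isDist_uniform.1 i) isDist_uniform.2
    fun i _ => Set.mem_Ici.mpr (hρ.1.eigenvalues_nonneg i)
  simp only [smul_eq_mul, ← Finset.mul_sum, hρ.sum_eigenvalues, mul_one] at hjensen
  rw [negMulLog, log_inv, neg_mul_neg, mul_le_mul_iff_right₀ (inv_pos.mpr hcard)] at hjensen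
  calc vnEntropy ρ = (∑ i, negMulLog (hρ.1.1.eigenvalues i)) / log 2 := by
        simp only [vnEntropy_eq_neg_sum hρ.1.1, negMulLog, logb, Finset.sum_div, neg_mul, neg_div,
          mul_div_assoc, Finset.sum_neg_distrib]
    _ ≤ log (Fintype.card ι) / log 2 := by
        have := log_nonneg one_le_two
        gcongr

lemma holevo_le_logb_card (hW : ∀ x, IsState (W x)) {P : X → ℝ} (hP : IsDist P) :
    holevo P W ≤ logb 2 (Fintype.card ι) :=
  (sub_le_self _ (Finset.sum_nonneg fun x _ => mul_nonneg (hP.1 x) (vnEntropy_nonneg (hW x)))).trans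
    (vnEntropy_le_logb_card (isState_sum_smul hP hW))

lemma holevoCapacity_le_logb_card (hW : ∀ x, IsState (W x)) :
    holevoCapacity W ≤ logb 2 (Fintype.card ι) := by
  refine Real.sSup_le ?_ (div_nonneg (log_natCast_nonneg _) (log_nonneg one_le_two))
  rintro _ ⟨P, hP, rfl⟩
  exact holevo_le_logb_card hW hP

lemma holevo_le_holevoCapacity (hW : ∀ x, IsState (W x)) {P : X → ℝ} (hP : IsDist P) :
    holevo P W ≤ holevoCapacity W := by
  refine le_csSup ⟨logb 2 (Fintype.card ι), ?_⟩ ⟨P, hP, rfl⟩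
  rintro _ ⟨Q, hQ, rfl⟩
  exact holevo_le_logb_card hW hQ

lemma sum_fiber_smul {E : Type*} [AddCommMonoid E] [Module ℝ E] [DecidableEq X] (P : M → ℝ)
    (f : M → X) (g : X → E) :
    ∑ x, (∑ m with f m = x, P m) • g x = ∑ m, P m • g (f m) := by
  rw [← Finset.sum_fiberwise Finset.univ f]
  refine Finset.sum_congr rfl fun x _ => ?_
  rw [Finset.sum_smul]
  exact Finset.sum_congr rfl fun m hm => by rw [(Finset.mem_filter.mp hm).2]

lemma isDist_sum_fiber [DecidableEq X] {P : M → ℝ} (hP : IsDist P) (f : M → X) :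
    IsDist fun x => ∑ m with f m = x, P m :=
  ⟨fun _ => Finset.sum_nonneg fun m _ => hP.1 m, (Finset.sum_fiberwise _ f P).trans hP.2⟩

lemma holevo_sum_fiber [DecidableEq X] (P : M → ℝ) (f : M → X) (W : X → Matrix ι ι ℂ) :
    holevo (fun x => ∑ m with f m = x, P m) W = holevo P (W ∘ f) := by
  have hmixture := sum_fiber_smul P f W
  have hcond := sum_fiber_smul P f fun x => vnEntropy (W x)
  simp only [smul_eq_mul] at hcond
  simp only [holevo, Complex.coe_smul, hmixture, hcond, Function.comp_apply]

lemma holevo_comp_le_holevoCapacity (hW : ∀ x, IsState (W x)) {P : M → ℝ} (hP : IsDist P)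
    (f : M → X) : holevo P (W ∘ f) ≤ holevoCapacity W := by
  classical
  rw [← holevo_sum_fiber]
  exact holevo_le_holevoCapacity hW (isDist_sum_fiber hP f)

lemma CodeExists.one_sub_mul_logb_sub_le_holevoCapacity {J : ℕ} {ε t : ℝ}
    (hcode : CodeExists W J ε) (hW : ∀ x, IsState (W x)) (hJ : 1 ≤ J) (ht : 1 ≤ t) :
    (1 - 2 * (ε + t * (J : ℝ)⁻¹)) * logb 2 t - 1 / log 2 ≤ holevoCapacity W := by
  obtain ⟨f, D, hD, herr⟩ := hcode
  have : Nonempty (Fin J) := ⟨⟨0, hJ⟩⟩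
  have hlogt : 0 ≤ logb 2 t := logb_nonneg one_lt_two ht
  have honeshot := (one_sub_error_mul_logb_sub_le_holevo (fun m => hW (f m)) hD ht).trans
    (holevo_comp_le_holevoCapacity hW isDist_uniform f)
  rw [Fintype.card_fin] at honeshot
  refine le_trans ?_ honeshot
  gcongr

lemma CodeExists.one_sub_mul_logb_mul_sub_le_holevoCapacity {J : ℕ} {ε : ℝ}
    (hcode : CodeExists W J ε) (hW : ∀ x, IsState (W x)) (hJ : 1 ≤ J) (hε : 0 < ε)
    (hε4 : ε ≤ 1 / 4) :
    (1 - 4 * ε) * logb 2 (ε * J) - 1 / log 2 ≤ holevoCapacity W := by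
  have hJ_pos : (0 : ℝ) < J := Nat.cast_pos.mpr hJ
  rcases le_total 1 (ε * J) with hlarge | hsmall
  · have h := hcode.one_sub_mul_logb_sub_le_holevoCapacity hW hJ hlarge
    rw [mul_inv_cancel_right₀ hJ_pos.ne'] at h
    convert h using 3
    ring
  · have h := hcode.one_sub_mul_logb_sub_le_holevoCapacity hW hJ le_rfl
    rw [logb_one, mul_zero] at h
    refine le_trans ?_ h
    gcongr
    exact mul_nonpos_of_nonneg_of_nonpos (by linarith)
      (logb_nonpos one_lt_two (by positivity) hsmall)

end Capacity

section TensorPower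

open Matrix

variable {A ι : Type*} [Fintype ι] {n : ℕ}

lemma trace_tensorPow (B : Fin n → Matrix ι ι ℂ) :
    (tensorPow B).trace = ∏ k, (B k).trace := by
  classical
  simp only [trace, diag_apply, tensorPow, of_apply]
  rw [Finset.prod_univ_sum, Fintype.piFinset_univ]

lemma tensorPow_conjTranspose_mul_self (B : Fin n → Matrix ι ι ℂ) :
    tensorPow (fun k => (B k)ᴴ * B k) = (tensorPow B)ᴴ * tensorPow B := by
  classical
  ext i j
  simp only [tensorPow, mul_apply, of_apply, conjTranspose_apply, Finset.prod_univ_sum,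
    Fintype.piFinset_univ, star_prod, Finset.prod_mul_distrib]

lemma posSemidef_tensorPow {B : Fin n → Matrix ι ι ℂ} (hB : ∀ k, (B k).PosSemidef) :
    (tensorPow B).PosSemidef := by
  choose C hC using fun k => exists_eq_conjTranspose_mul_self (hB k)
  rw [funext hC, tensorPow_conjTranspose_mul_self]
  exact posSemidef_conjTranspose_mul_self _

lemma isState_cqPow {W : A → Matrix ι ι ℂ} (hW : ∀ a, IsState (W a)) (x : Fin n → A) :
    IsState (cqPow W n x) :=
  ⟨posSemidef_tensorPow fun k => (hW (x k)).1,
    (trace_tensorPow _).trans (Finset.prod_eq_one fun k _ => (hW (x k)).2)⟩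

end TensorPower

section Rate

open Filter Real Topology

variable {A ι : Type*} [Fintype A] [Fintype ι] [DecidableEq ι] {W : A → Matrix ι ι ℂ} {R : ℝ}

/-- `R` is an achievable rate, under the average error criterion, of the memoryless cq channel
with `n`-fold extension `cqPow W n`. -/
def IsAchievableRate (W : A → Matrix ι ι ℂ) (R : ℝ) : Prop :=
  ∀ ε : ℝ, 0 < ε → ∀ δ : ℝ, 0 < δ → ∃ N : ℕ, ∀ n : ℕ, N ≤ n →
    ∃ J : ℕ, 1 ≤ J ∧ R - δ ≤ (1 / n : ℝ) * logb 2 J ∧ CodeExists (cqPow W n) J ε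

lemma holevoCapacity_cqPow_div_le (hW : ∀ a, IsState (W a)) (n : ℕ) :
    (1 / n : ℝ) * holevoCapacity (cqPow W n) ≤ logb 2 (Fintype.card ι) := by
  have hcap := holevoCapacity_le_logb_card (isState_cqPow (n := n) hW)
  rw [Fintype.card_fun, Fintype.card_fin, Nat.cast_pow, logb_pow] at hcap
  calc (1 / n : ℝ) * holevoCapacity (cqPow W n)
      ≤ 1 / n * (n * logb 2 (Fintype.card ι)) := by gcongr
    _ = (n : ℝ) / n * logb 2 (Fintype.card ι) := by ring
    _ ≤ logb 2 (Fintype.card ι) :=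
        mul_le_of_le_one_left (div_nonneg (log_natCast_nonneg _) (log_nonneg one_le_two))
          (div_self_le_one _)

lemma IsAchievableRate.eventually_le (hR : IsAchievableRate W R) (hW : ∀ a, IsState (W a))
    {ε : ℝ} (hε : 0 < ε) (hε4 : ε ≤ 1 / 4) :
    ∀ᶠ n : ℕ in atTop, (1 - 4 * ε) * (R - ε) + 1 / n * ((1 - 4 * ε) * logb 2 ε - 1 / log 2) ≤
      (1 / n : ℝ) * holevoCapacity (cqPow W n) := by
  obtain ⟨N, hN⟩ := hR ε hε ε hε
  filter_upwards [eventually_ge_atTop N] with n hn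
  obtain ⟨J, hJ, hrate, hcode⟩ := hN n hn
  have hJ_ne : (J : ℝ) ≠ 0 := Nat.cast_ne_zero.mpr (Nat.one_le_iff_ne_zero.mp hJ)
  have hfactor : 0 ≤ 1 - 4 * ε := by linarith
  calc (1 - 4 * ε) * (R - ε) + 1 / n * ((1 - 4 * ε) * logb 2 ε - 1 / log 2)
      ≤ (1 - 4 * ε) * (1 / n * logb 2 J) + 1 / n * ((1 - 4 * ε) * logb 2 ε - 1 / log 2) := by
        gcongr
    _ = (1 / n : ℝ) * ((1 - 4 * ε) * logb 2 (ε * J) - 1 / log 2) := by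
        rw [logb_mul hε.ne' hJ_ne]
        ring
    _ ≤ (1 / n : ℝ) * holevoCapacity (cqPow W n) := by
        gcongr
        exact hcode.one_sub_mul_logb_mul_sub_le_holevoCapacity (isState_cqPow hW) hJ hε hε4

lemma IsAchievableRate.one_sub_mul_sub_le_limsup (hR : IsAchievableRate W R)
    (hW : ∀ a, IsState (W a)) {ε : ℝ} (hε : 0 < ε) (hε4 : ε ≤ 1 / 4) :
    (1 - 4 * ε) * (R - ε) ≤
      atTop.limsup fun n : ℕ => (1 / n : ℝ) * holevoCapacity (cqPow W n) := by
  have hlim : Tendsto (fun n : ℕ => (1 - 4 * ε) * (R - ε) +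
      1 / n * ((1 - 4 * ε) * logb 2 ε - 1 / log 2)) atTop (𝓝 ((1 - 4 * ε) * (R - ε))) := by
    simpa using (tendsto_one_div_atTop_nhds_zero_nat.mul_const
      ((1 - 4 * ε) * logb 2 ε - 1 / log 2)).const_add ((1 - 4 * ε) * (R - ε))
  have hbdd : IsBoundedUnder (· ≤ ·) atTop fun n : ℕ =>
      (1 / n : ℝ) * holevoCapacity (cqPow W n) :=
    isBoundedUnder_of ⟨logb 2 (Fintype.card ι), holevoCapacity_cqPow_div_le hW⟩
  rw [← hlim.limsup_eq]
  exact limsup_le_limsup (hR.eventually_le hW hε hε4) hlim.isCoboundedUnder_le hbdd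

lemma IsAchievableRate.le_limsup (hR : IsAchievableRate W R) (hW : ∀ a, IsState (W a)) :
    R ≤ atTop.limsup fun n : ℕ => (1 / n : ℝ) * holevoCapacity (cqPow W n) := by
  have hlim : Tendsto (fun ε : ℝ => (1 - 4 * ε) * (R - ε)) (𝓝[>] 0) (𝓝 R) := by
    refine Tendsto.mono_left ?_ nhdsWithin_le_nhds
    have hcont : Continuous fun ε : ℝ => (1 - 4 * ε) * (R - ε) := by fun_prop
    simpa using hcont.tendsto 0
  refine le_of_tendsto hlim ?_
  filter_upwards [Ioc_mem_nhdsGT (show (0 : ℝ) < 1 / 4 by norm_num)] with ε hε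
  exact hR.one_sub_mul_sub_le_limsup hW hε.1 hε.2

end Rate

section Broadcast

variable {A ι₁ ι₂ : Type*} [Fintype A] [Fintype ι₁] [DecidableEq ι₁] [Fintype ι₂] [DecidableEq ι₂]
  {W1 : A → Matrix ι₁ ι₁ ℂ} {W2 : A → Matrix ι₂ ι₂ ℂ} {n J1 J2 : ℕ} {ε₁ ε₂ : ℝ}

lemma BroadcastCodeExists.codeExists_fst (hcode : BroadcastCodeExists W1 W2 n J1 J2 ε₁ ε₂)
    (hJ2 : 1 ≤ J2) : CodeExists (cqPow W1 n) J1 ε₁ := by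
  obtain ⟨w, D1, -, hD1, -, herr1, -⟩ := hcode
  exact ⟨fun m1 => w (m1, ⟨0, hJ2⟩), D1 ⟨0, hJ2⟩, hD1 _, herr1 _⟩

lemma BroadcastCodeExists.codeExists_snd (hcode : BroadcastCodeExists W1 W2 n J1 J2 ε₁ ε₂)
    (hJ1 : 1 ≤ J1) : CodeExists (cqPow W2 n) J2 ε₂ := by
  obtain ⟨w, -, D2, -, hD2, -, herr2⟩ := hcode
  exact ⟨fun m2 => w (⟨0, hJ1⟩, m2), D2 ⟨0, hJ1⟩, hD2 _, herr2 _⟩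

end Broadcast

/-- Converse part of the broadcast-phase capacity theorem. -/
theorem broadcast_phase_converse
    {A ι₁ ι₂ : Type*} [Fintype A] [Fintype ι₁] [DecidableEq ι₁] [Fintype ι₂] [DecidableEq ι₂]
    (W1 : A → Matrix ι₁ ι₁ ℂ) (W2 : A → Matrix ι₂ ι₂ ℂ)
    (hW1 : ∀ a, IsState (W1 a)) (hW2 : ∀ a, IsState (W2 a))
    (R1 R2 : ℝ) (hR1 : 0 ≤ R1) (hR2 : 0 ≤ R2)
    (hach : ∀ ε : ℝ, 0 < ε → ∀ δ : ℝ, 0 < δ → ∃ N : ℕ, ∀ n : ℕ, N ≤ n →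
      ∃ J1 J2 : ℕ, 1 ≤ J1 ∧ 1 ≤ J2 ∧
        R1 - δ ≤ (1 / n : ℝ) * Real.logb 2 J1 ∧
        R2 - δ ≤ (1 / n : ℝ) * Real.logb 2 J2 ∧
        BroadcastCodeExists W1 W2 n J1 J2 ε ε) :
    R1 ≤ Filter.atTop.limsup (fun n : ℕ =>
        (1 / n : ℝ) *
          sSup {x : ℝ | ∃ P : (Fin n → A) → ℝ, IsDist P ∧ x = holevo P (cqPow W1 n)}) ∧
    R2 ≤ Filter.atTop.limsup (fun n : ℕ =>
        (1 / n : ℝ) *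
          sSup {x : ℝ | ∃ P : (Fin n → A) → ℝ, IsDist P ∧ x = holevo P (cqPow W2 n)}) := by
  have hrate1 : IsAchievableRate W1 R1 := fun ε hε δ hδ => by
    obtain ⟨N, hN⟩ := hach ε hε δ hδ
    refine ⟨N, fun n hn => ?_⟩
    obtain ⟨J1, J2, hJ1, hJ2, hJR1, -, hcode⟩ := hN n hn
    exact ⟨J1, hJ1, hJR1, hcode.codeExists_fst hJ2⟩
  have hrate2 : IsAchievableRate W2 R2 := fun ε hε δ hδ => by
    obtain ⟨N, hN⟩ := hach ε hε δ hδ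
    refine ⟨N, fun n hn => ?_⟩
    obtain ⟨J1, J2, hJ1, hJ2, -, hJR2, hcode⟩ := hN n hn
    exact ⟨J2, hJ2, hJR2, hcode.codeExists_snd hJ1⟩
  exact ⟨hrate1.le_limsup hW1, hrate2.le_limsup hW2⟩
end

section
/- Tender (gentle) operator lemma: Let ρ be a quantum state on a finite-dimensional complex Hilbert space H, and let X be a positive semidefinite operator on H with X ≤ id. If λ is a real number with 1 − tr(ρX) ≤ λ ≤ 1, then ‖ρ − √X ρ √X‖₁ ≤ √(8λ), where √X denotes the positive semidefinite square root of X. -/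
open scoped BigOperators ComplexOrder

noncomputable section

/-- The positive semidefinite square root of a positive semidefinite matrix
(definition of the older Mathlib, since removed). -/
noncomputable def Matrix.PosSemidef.sqrt {n 𝕜 : Type*} [Fintype n] [RCLike 𝕜] [DecidableEq n]
    {A : Matrix n n 𝕜} (hA : A.PosSemidef) : Matrix n n 𝕜 :=
  hA.1.eigenvectorUnitary.1 * Matrix.diagonal ((↑) ∘ Real.sqrt ∘ hA.1.eigenvalues) *
    (star hA.1.eigenvectorUnitary : Matrix n n 𝕜)

end

/-!
Write `S = √X`, so that `ρ - S ρ S = (1 - S) ρ + S ρ (1 - S)`. Each summand has the form `A ρ Bᴴ`,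
and the Cauchy–Schwarz inequality for the semi-inner product `(A, B) ↦ tr (A ρ Bᴴ)`, combined with
the polar decomposition, gives `‖A ρ Bᴴ‖₁ ≤ √(tr (A ρ Aᴴ)) √(tr (B ρ Bᴴ))`. Since `X ≤ 1` forces
`S² ≤ S`, we have `(1 - S)² ≤ 1 - X` and hence `tr ((1 - S) ρ (1 - S)) ≤ tr (ρ (1 - X))`. Both
summands are therefore bounded by `√(tr ρ) √(tr (ρ (1 - X)))`.
-/

open scoped Matrix MatrixOrder

section TraceInequalities

variable {ι 𝕜 : Type*} [Fintype ι] [RCLike 𝕜]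

theorem trace_mul_nonneg {P Q : Matrix ι ι 𝕜} (hP : P.PosSemidef) (hQ : Q.PosSemidef) :
    0 ≤ (P * Q).trace := by
  classical
  obtain ⟨C, rfl⟩ := CStarAlgebra.nonneg_iff_eq_star_mul_self.mp hP.nonneg
  rw [Matrix.mul_assoc, Matrix.trace_mul_comm]
  exact (hQ.mul_mul_conjTranspose_same C).trace_nonneg

theorem trace_mul_le_trace_mul_left {P A B : Matrix ι ι 𝕜} (hP : P.PosSemidef) (hAB : A ≤ B) :
    (P * A).trace ≤ (P * B).trace := by
  simpa only [Matrix.mul_sub, Matrix.trace_sub, sub_nonneg] using trace_mul_nonneg hP hAB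

theorem trace_conj_le_trace [DecidableEq ι] {U P : Matrix ι ι 𝕜} (hU : Uᴴ * U ≤ 1)
    (hP : P.PosSemidef) : (U * P * Uᴴ).trace ≤ P.trace := by
  calc (U * P * Uᴴ).trace = (P * (Uᴴ * U)).trace := by
        rw [Matrix.mul_assoc, Matrix.trace_mul_comm, Matrix.mul_assoc]
    _ ≤ P.trace := by simpa only [Matrix.mul_one] using trace_mul_le_trace_mul_left hP hU

theorem norm_trace_mul_mul_conjTranspose_le {P : Matrix ι ι 𝕜} (hP : P.PosSemidef)
    (A B : Matrix ι ι 𝕜) :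
    ‖(A * P * Bᴴ).trace‖ ≤
      √(RCLike.re (A * P * Aᴴ).trace) * √(RCLike.re (B * P * Bᴴ).trace) := by
  let := P.toMatrixSeminormedAddCommGroup hP
  let := P.toMatrixInnerProductSpace hP
  rw [mul_comm]
  exact norm_inner_le_norm (𝕜 := 𝕜) B A

theorem trace_one_sub_conj_le [DecidableEq ι] {P S : Matrix ι ι 𝕜} (hP : P.PosSemidef)
    (hS : S.IsHermitian) (hSS : S * S ≤ S) :
    ((1 - S) * P * (1 - S)ᴴ).trace ≤ (P * (1 - S * S)).trace := by
  have hsq : (1 - S) * (1 - S) ≤ 1 - S * S := by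
    rw [← sub_nonneg] at hSS ⊢
    convert add_nonneg hSS hSS using 1
    noncomm_ring
  calc ((1 - S) * P * (1 - S)ᴴ).trace = (P * ((1 - S) * (1 - S))).trace := by
        rw [Matrix.conjTranspose_sub, Matrix.conjTranspose_one, hS.eq, Matrix.mul_assoc,
          Matrix.trace_mul_comm, Matrix.mul_assoc]
    _ ≤ (P * (1 - S * S)).trace := trace_mul_le_trace_mul_left hP hsq

end TraceInequalities

section SquareRoot

variable {ι 𝕜 : Type*} [Fintype ι] [DecidableEq ι] [RCLike 𝕜]

theorem posSemidefSqrt_eq_cfc {A : Matrix ι ι 𝕜} (hA : A.PosSemidef) :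
    hA.sqrt = cfc Real.sqrt A :=
  (hA.1.cfc_eq Real.sqrt).symm

theorem posSemidefSqrt_eq_cfcSqrt {A : Matrix ι ι 𝕜} (hA : A.PosSemidef) :
    hA.sqrt = CFC.sqrt A := by
  rw [posSemidefSqrt_eq_cfc, CFC.sqrt_eq_real_sqrt A hA.nonneg, cfcₙ_eq_cfc]

theorem trace_posSemidefSqrt {A : Matrix ι ι 𝕜} (hA : A.PosSemidef) :
    hA.sqrt.trace = ∑ i, (√(hA.1.eigenvalues i) : 𝕜) := by
  rw [Matrix.PosSemidef.sqrt, Matrix.trace_mul_cycle, Unitary.coe_star_mul_self, Matrix.one_mul,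
    Matrix.trace_diagonal]
  rfl

theorem isHermitian_posSemidefSqrt {A : Matrix ι ι 𝕜} (hA : A.PosSemidef) :
    hA.sqrt.IsHermitian := by
  rw [posSemidefSqrt_eq_cfc]
  exact cfc_predicate Real.sqrt A

theorem posSemidefSqrt_mul_self {A : Matrix ι ι 𝕜} (hA : A.PosSemidef) :
    hA.sqrt * hA.sqrt = A := by
  rw [posSemidefSqrt_eq_cfcSqrt, CFC.sqrt_mul_sqrt_self A hA.nonneg]

theorem le_posSemidefSqrt_of_le_one {A : Matrix ι ι 𝕜} (hA : A.PosSemidef) (hA1 : A ≤ 1) :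
    A ≤ hA.sqrt := by
  have hspec : ∀ x ∈ spectrum ℝ A, x ≤ √x := fun x hx ↦ by
    have hx0 : 0 ≤ x := spectrum_nonneg_of_nonneg hA.nonneg hx
    have hx1 : x ≤ 1 := (CFC.le_one_iff A hA.1).mp hA1 x hx
    exact Real.le_sqrt_of_sq_le (by nlinarith)
  calc A = cfc (fun x : ℝ ↦ x) A := (cfc_id' ℝ A hA.1).symm
    _ ≤ cfc Real.sqrt A := cfc_mono hspec
    _ = hA.sqrt := (posSemidefSqrt_eq_cfc hA).symm

end SquareRoot

section PolarDecomposition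

variable {ι 𝕜 : Type*} [Fintype ι] [DecidableEq ι] [RCLike 𝕜]

theorem exists_pseudoinverse {H : Matrix ι ι 𝕜} (hH : H.IsHermitian) :
    ∃ Q : Matrix ι ι 𝕜, Q.IsHermitian ∧ Q * H = H * Q ∧ H * Q * H = H ∧ H * Q ≤ 1 := by
  have hcont (f : ℝ → ℝ) : ContinuousOn f (spectrum ℝ H) := H.finite_real_spectrum.continuousOn f
  have hid : cfc (fun x : ℝ ↦ x) H = H := cfc_id' ℝ H hH
  have hmul (f : ℝ → ℝ) : H * cfc f H = cfc (fun x ↦ x * f x) H := by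
    rw [cfc_mul _ f H (hcont _) (hcont _), hid]
  have hcomm (f : ℝ → ℝ) : Commute (cfc f H) H := by
    simpa only [hid] using cfc_commute_cfc f (fun x ↦ x) H
  -- The convention `0⁻¹ = 0` makes this the inverse of `H` on its range, extended by `0`.
  refine ⟨cfc (fun x : ℝ ↦ x⁻¹) H, cfc_predicate _ H, hcomm _, ?_, ?_⟩
  · rw [hmul, (hcomm _).eq, hmul]
    simpa only [← mul_assoc, mul_self_mul_inv] using hid
  · rw [hmul]
    exact cfc_le_one _ H fun x _ ↦ mul_inv_le_one

theorem exists_polar_decomposition (A : Matrix ι ι 𝕜) :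
    ∃ U : Matrix ι ι 𝕜, Uᴴ * U ≤ 1 ∧ U * CFC.abs A = A ∧ Uᴴ * A = CFC.abs A := by
  have habs : Aᴴ * A = CFC.abs A * CFC.abs A := (CFC.abs_mul_abs A).symm
  have hH : (CFC.abs A)ᴴ = CFC.abs A := (CFC.abs_nonneg A).isSelfAdjoint
  generalize CFC.abs A = P at *
  obtain ⟨Q, hQ, hcomm, hPQP, hle⟩ := exists_pseudoinverse hH
  have hUA : (A * Q)ᴴ * A = P := by
    rw [Matrix.conjTranspose_mul, hQ.eq, Matrix.mul_assoc, habs, ← Matrix.mul_assoc, hcomm, hPQP]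
  refine ⟨A * Q, ?_, ?_, hUA⟩
  · rwa [← Matrix.mul_assoc, hUA]
  · have hker : A * (Q * P - 1) = 0 := by
      rw [← Matrix.conjTranspose_mul_self_mul_eq_zero, habs, Matrix.mul_sub, Matrix.mul_one,
        Matrix.mul_assoc, ← Matrix.mul_assoc P Q, hPQP, sub_self]
    rwa [Matrix.mul_sub, Matrix.mul_one, sub_eq_zero, ← Matrix.mul_assoc] at hker

end PolarDecomposition

section TraceNorm

variable {ι : Type*} [Fintype ι] [DecidableEq ι]

theorem ofReal_traceNorm (A : Matrix ι ι ℂ) : (traceNorm A : ℂ) = (CFC.abs A).trace := by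
  have hsqrt := trace_posSemidefSqrt (Matrix.posSemidef_conjTranspose_mul_self A)
  rw [posSemidefSqrt_eq_cfcSqrt] at hsqrt
  rw [traceNorm, Complex.ofReal_sum]
  exact hsqrt.symm

theorem traceNorm_eq_re_trace_abs (A : Matrix ι ι ℂ) : traceNorm A = (CFC.abs A).trace.re := by
  rw [← ofReal_traceNorm, Complex.ofReal_re]

theorem norm_trace_conjTranspose_mul_le_traceNorm {U : Matrix ι ι ℂ} (hU : Uᴴ * U ≤ 1)
    (A : Matrix ι ι ℂ) : ‖(Uᴴ * A).trace‖ ≤ traceNorm A := by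
  obtain ⟨V, hV, hVA, -⟩ := exists_polar_decomposition A
  have hpos : (CFC.abs A).PosSemidef := Matrix.nonneg_iff_posSemidef.mp (CFC.abs_nonneg A)
  have hcontr {W : Matrix ι ι ℂ} (hW : Wᴴ * W ≤ 1) :
      (W * CFC.abs A * Wᴴ).trace.re ≤ traceNorm A := by
    rw [traceNorm_eq_re_trace_abs]
    exact Complex.re_le_re (trace_conj_le_trace hW hpos)
  calc ‖(Uᴴ * A).trace‖ = ‖(V * CFC.abs A * Uᴴ).trace‖ := by rw [hVA, Matrix.trace_mul_comm]
    _ ≤ √((V * CFC.abs A * Vᴴ).trace.re) * √((U * CFC.abs A * Uᴴ).trace.re) :=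
      norm_trace_mul_mul_conjTranspose_le hpos V U
    _ ≤ √(traceNorm A) * √(traceNorm A) := by
      gcongr
      exacts [hcontr hV, hcontr hU]
    _ = traceNorm A := Real.mul_self_sqrt (Finset.sum_nonneg fun _ _ ↦ Real.sqrt_nonneg _)

theorem exists_trace_conjTranspose_mul_eq_traceNorm (A : Matrix ι ι ℂ) :
    ∃ U : Matrix ι ι ℂ, Uᴴ * U ≤ 1 ∧ (Uᴴ * A).trace = traceNorm A := by
  obtain ⟨U, hU, -, hUA⟩ := exists_polar_decomposition A
  exact ⟨U, hU, by rw [hUA, ofReal_traceNorm]⟩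

theorem traceNorm_add_le (A B : Matrix ι ι ℂ) :
    traceNorm (A + B) ≤ traceNorm A + traceNorm B := by
  obtain ⟨U, hU, hUAB⟩ := exists_trace_conjTranspose_mul_eq_traceNorm (A + B)
  calc traceNorm (A + B) ≤ ‖(traceNorm (A + B) : ℂ)‖ := Complex.re_le_norm (traceNorm (A + B))
    _ = ‖(Uᴴ * A).trace + (Uᴴ * B).trace‖ := by rw [← hUAB, Matrix.mul_add, Matrix.trace_add]
    _ ≤ ‖(Uᴴ * A).trace‖ + ‖(Uᴴ * B).trace‖ := norm_add_le _ _
    _ ≤ traceNorm A + traceNorm B :=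
      add_le_add (norm_trace_conjTranspose_mul_le_traceNorm hU A)
        (norm_trace_conjTranspose_mul_le_traceNorm hU B)

theorem traceNorm_mul_mul_conjTranspose_le {P : Matrix ι ι ℂ} (hP : P.PosSemidef)
    (A B : Matrix ι ι ℂ) :
    traceNorm (A * P * Bᴴ) ≤ √(A * P * Aᴴ).trace.re * √(B * P * Bᴴ).trace.re := by
  obtain ⟨U, hU, hUAB⟩ := exists_trace_conjTranspose_mul_eq_traceNorm (A * P * Bᴴ)
  have hUB : (U * B * P * (U * B)ᴴ).trace.re ≤ (B * P * Bᴴ).trace.re := by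
    have := trace_conj_le_trace hU (hP.mul_mul_conjTranspose_same B)
    simpa only [Matrix.conjTranspose_mul, Matrix.mul_assoc] using Complex.re_le_re this
  calc traceNorm (A * P * Bᴴ) ≤ ‖(traceNorm (A * P * Bᴴ) : ℂ)‖ :=
        Complex.re_le_norm (traceNorm (A * P * Bᴴ))
    _ = ‖(A * P * (U * B)ᴴ).trace‖ := by
      rw [← hUAB, Matrix.trace_mul_comm, Matrix.conjTranspose_mul, Matrix.mul_assoc (A * P)]
    _ ≤ √(A * P * Aᴴ).trace.re * √(U * B * P * (U * B)ᴴ).trace.re :=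
      norm_trace_mul_mul_conjTranspose_le hP A (U * B)
    _ ≤ √(A * P * Aᴴ).trace.re * √(B * P * Bᴴ).trace.re := by gcongr

end TraceNorm

theorem tender_operator_general {ι : Type*} [Fintype ι] [DecidableEq ι] {ρ X : Matrix ι ι ℂ}
    (hρ : ρ.PosSemidef) (hX : X.PosSemidef) (hXle : loewnerLE X 1) :
    traceNorm (ρ - hX.sqrt * ρ * hX.sqrt) ≤ 2 * (√ρ.trace.re * √(ρ * (1 - X)).trace.re) := by
  have hSH : hX.sqrt.IsHermitian := isHermitian_posSemidefSqrt hX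
  have hSS : hX.sqrt * hX.sqrt = X := posSemidefSqrt_mul_self hX
  have hXS : X ≤ hX.sqrt := le_posSemidefSqrt_of_le_one hX hXle
  generalize hX.sqrt = S at *
  subst hSS
  have hconj : (S * ρ * Sᴴ).trace.re ≤ ρ.trace.re :=
    Complex.re_le_re (trace_conj_le_trace (by rwa [hSH.eq]) hρ)
  have hdefect : ((1 - S) * ρ * (1 - S)ᴴ).trace.re ≤ (ρ * (1 - S * S)).trace.re :=
    Complex.re_le_re (trace_one_sub_conj_le hρ hSH hXS)
  calc traceNorm (ρ - S * ρ * S)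
      = traceNorm ((1 - S) * ρ * 1ᴴ + S * ρ * (1 - S)ᴴ) := by
        rw [Matrix.conjTranspose_sub, hSH.eq, Matrix.conjTranspose_one]
        congr 1
        noncomm_ring
    _ ≤ traceNorm ((1 - S) * ρ * 1ᴴ) + traceNorm (S * ρ * (1 - S)ᴴ) := traceNorm_add_le _ _
    _ ≤ √((1 - S) * ρ * (1 - S)ᴴ).trace.re * √(1 * ρ * 1ᴴ).trace.re +
        √(S * ρ * Sᴴ).trace.re * √((1 - S) * ρ * (1 - S)ᴴ).trace.re :=
      add_le_add (traceNorm_mul_mul_conjTranspose_le hρ _ _)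
        (traceNorm_mul_mul_conjTranspose_le hρ _ _)
    _ ≤ √(ρ * (1 - S * S)).trace.re * √ρ.trace.re +
        √ρ.trace.re * √(ρ * (1 - S * S)).trace.re := by
      rw [Matrix.conjTranspose_one, Matrix.one_mul, Matrix.mul_one]
      gcongr
    _ = 2 * (√ρ.trace.re * √(ρ * (1 - S * S)).trace.re) := by ring

/-- Tender (gentle) operator lemma. -/
theorem tender_operator
    {ι : Type*} [Fintype ι] [DecidableEq ι]
    (ρ X : Matrix ι ι ℂ) (hρ : IsState ρ) (hX : X.PosSemidef) (hXle : loewnerLE X 1)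
    (lam : ℝ) (hlam₁ : 1 - (ρ * X).trace.re ≤ lam) (hlam₂ : lam ≤ 1) :
    traceNorm (ρ - hX.sqrt * ρ * hX.sqrt) ≤ Real.sqrt (8 * lam) := by
  have hdefect : (ρ * (1 - X)).trace.re = 1 - (ρ * X).trace.re := by
    rw [Matrix.mul_sub, Matrix.mul_one, Matrix.trace_sub, hρ.2, Complex.sub_re, Complex.one_re]
  have hnonneg : 0 ≤ (ρ * (1 - X)).trace.re := Complex.re_le_re (trace_mul_nonneg hρ.1 hXle)
  calc traceNorm (ρ - hX.sqrt * ρ * hX.sqrt)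
      ≤ 2 * (√ρ.trace.re * √(ρ * (1 - X)).trace.re) := tender_operator_general hρ.1 hX hXle
    _ = √(4 * (ρ * (1 - X)).trace.re) := by
      rw [hρ.2, Complex.one_re, Real.sqrt_one, one_mul, Real.sqrt_mul (by norm_num)]
      norm_num
    _ ≤ √(8 * lam) := Real.sqrt_le_sqrt (by linarith)
end

section
/- Sandwiched detection success bound (abstract form of the paper's analysis of errors of the first kind): Let ρ be a quantum state on a finite-dimensional complex Hilbert space H, let Π̄ be an orthogonal projection on H, and let Π′ be a positive semidefinite operator on H with Π′ ≤ id. If tr(ρ Π̄) ≥ 1 − λ and tr(ρ Π′) ≥ 1 − λ′ for reals λ, λ′ with 0 ≤ λ ≤ 1, then tr(ρ · Π̄ Π′ Π̄) ≥ 1 − λ′ − √(8λ). -/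
open scoped BigOperators ComplexOrder

/-!
The functional `φ X = re tr(ρ X)` is positive, so for `t ≥ 0` the form `(x, y) ↦ φ (x⋆ t y)` obeys
Cauchy–Schwarz. Writing `q = 1 - e`, expand `e t e = t - (q t + t q) + q t q`. The last term is
nonnegative under `φ`, and Cauchy–Schwarz for `1` and `q` bounds the square of the cross term by
`4 φ(t) φ(q t q) ≤ 4 φ(1) φ(q)`, because `t ≤ 1` and `q² ≤ q`. The argument lives in an arbitrary
star-ordered real algebra, for elements `0 ≤ e ≤ 1` and `0 ≤ t ≤ 1`.
-/

section StarOrderedRing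

variable {A : Type*} [Ring A] [StarRing A] [PartialOrder A] [StarOrderedRing A]

theorem mul_self_le_self_of_nonneg_of_le_one {q : A} (hq₀ : 0 ≤ q) (hq₁ : q ≤ 1) :
    q * q ≤ q := by
  have hdecomp : q - q * q = (1 - q) * q * (1 - q) + q * (1 - q) * q := by noncomm_ring
  have hcompl : 0 ≤ 1 - q := sub_nonneg.mpr hq₁
  rw [← sub_nonneg, hdecomp]
  exact add_nonneg (conjugate_nonneg_of_nonneg hq₀ hcompl) (conjugate_nonneg_of_nonneg hcompl hq₀)

theorem conjugate_le_self_of_nonneg_of_le_one {q t : A} (hq₀ : 0 ≤ q) (hq₁ : q ≤ 1) (ht : t ≤ 1) :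
    q * t * q ≤ q :=
  calc q * t * q ≤ q * 1 * q := conjugate_le_conjugate_of_nonneg ht hq₀
    _ = q * q := by rw [mul_one]
    _ ≤ q := mul_self_le_self_of_nonneg_of_le_one hq₀ hq₁

end StarOrderedRing

section PositiveFunctional

variable {A : Type*} [Ring A] [StarRing A] [PartialOrder A] [StarOrderedRing A]
  [Algebra ℝ A] [StarModule ℝ A] (φ : A →ₚ[ℝ] ℝ)

theorem sq_map_cross_le_four_mul_map_mul_map {t : A} (ht : 0 ≤ t) (x y : A) :
    φ (star x * t * y + star y * t * x) ^ 2 ≤ 4 * φ (star x * t * x) * φ (star y * t * y) := by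
  have hquad (s : ℝ) : 0 ≤ φ (star x * t * x) * (s * s) +
      φ (star x * t * y + star y * t * x) * s + φ (star y * t * y) := by
    have hexpand : star (s • x + y) * t * (s • x + y) = (s * s) • (star x * t * x) +
        s • (star x * t * y + star y * t * x) + star y * t * y := by
      simp only [star_add, star_smul, star_trivial, add_mul, mul_add, smul_mul_assoc,
        mul_smul_comm, smul_smul, smul_add]
      abel
    have hnonneg := map_nonneg φ (star_left_conjugate_nonneg ht (s • x + y))
    rw [hexpand, map_add, map_add, map_smul, map_smul, smul_eq_mul, smul_eq_mul] at hnonneg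
    linarith
  simpa only [discrim, sub_nonpos] using discrim_le_zero hquad

theorem map_sub_sqrt_le_map_conjugate {e t : A} (he₀ : 0 ≤ e) (he₁ : e ≤ 1)
    (ht₀ : 0 ≤ t) (ht₁ : t ≤ 1) :
    φ t - √(4 * φ 1 * φ (1 - e)) ≤ φ (e * t * e) := by
  obtain ⟨q, rfl⟩ : ∃ q, e = 1 - q := ⟨1 - e, (sub_sub_cancel 1 e).symm⟩
  have hq₀ : 0 ≤ q := by simpa using he₁
  have hq₁ : q ≤ 1 := sub_nonneg.mp he₀
  have hexpand : φ ((1 - q) * t * (1 - q)) = φ t - φ (t * q + q * t) + φ (q * t * q) := by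
    rw [← map_sub, ← map_add]
    congr 1
    noncomm_ring
  have hqtq : 0 ≤ φ (q * t * q) := map_nonneg φ (conjugate_nonneg_of_nonneg ht₀ hq₀)
  have hcross : φ (t * q + q * t) ≤ √(4 * φ 1 * φ q) := by
    apply Real.le_sqrt_of_sq_le
    calc φ (t * q + q * t) ^ 2 ≤ 4 * φ t * φ (q * t * q) := by
          simpa [(IsSelfAdjoint.of_nonneg hq₀).star_eq] using
            sq_map_cross_le_four_mul_map_mul_map φ ht₀ 1 q
      _ ≤ 4 * φ 1 * φ q := by
          gcongr
          · exact mul_nonneg zero_le_four (map_nonneg φ (ht₀.trans ht₁))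
          · exact conjugate_le_self_of_nonneg_of_le_one hq₀ hq₁ ht₁
  rw [hexpand, sub_sub_cancel]
  linarith

theorem sandwiched_detection_success_general (hφ : φ 1 ≤ 1) {e t : A} (he₀ : 0 ≤ e) (he₁ : e ≤ 1)
    (ht₀ : 0 ≤ t) (ht₁ : t ≤ 1) {lam lam' : ℝ} (he : 1 - lam ≤ φ e) (ht : 1 - lam' ≤ φ t) :
    1 - lam' - √(4 * lam) ≤ φ (e * t * e) := by
  have hmiss₀ : 0 ≤ φ (1 - e) := map_nonneg φ (sub_nonneg.mpr he₁)
  have hmiss : φ (1 - e) ≤ lam := by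
    rw [map_sub]
    linarith
  calc 1 - lam' - √(4 * lam) ≤ φ t - √(4 * φ 1 * φ (1 - e)) := by
        gcongr
        exact mul_le_of_le_one_right zero_le_four hφ
    _ ≤ φ (e * t * e) := map_sub_sqrt_le_map_conjugate φ he₀ he₁ ht₀ ht₁

end PositiveFunctional

section Matrix

open scoped MatrixOrder

variable {ι 𝕜 : Type*} [Fintype ι] [RCLike 𝕜] {ρ : Matrix ι ι 𝕜}

theorem trace_mul_nonneg_of_posSemidef {X : Matrix ι ι 𝕜} (hρ : ρ.PosSemidef) (hX : X.PosSemidef) :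
    0 ≤ (ρ * X).trace := by
  classical
  obtain ⟨B, rfl⟩ := CStarAlgebra.nonneg_iff_eq_star_mul_self.mp hρ.nonneg
  rw [Matrix.star_eq_conjTranspose, Matrix.mul_assoc, Matrix.trace_mul_comm]
  exact (hX.mul_mul_conjTranspose_same B).trace_nonneg

/-- The expectation functional `X ↦ re tr(ρ X)` of a positive semidefinite `ρ`, not necessarily of
unit trace. Taking the real part makes it a real-valued, real-linear functional on all matrices. -/
noncomputable def expectation (hρ : ρ.PosSemidef) : Matrix ι ι 𝕜 →ₚ[ℝ] ℝ :=
  .mk₀ (RCLike.reLm ∘ₗ Matrix.traceLinearMap ι ℝ 𝕜 ∘ₗ LinearMap.mulLeft ℝ ρ) fun _ hX ↦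
    have hX : Matrix.PosSemidef _ := Matrix.nonneg_iff_posSemidef.mp hX
    (RCLike.nonneg_iff.mp (trace_mul_nonneg_of_posSemidef hρ hX)).1

theorem expectation_apply (hρ : ρ.PosSemidef) (X : Matrix ι ι 𝕜) :
    expectation hρ X = RCLike.re (ρ * X).trace :=
  rfl

end Matrix

/-- Sandwiched detection success bound (errors of the first kind). -/
theorem sandwiched_detection_success
    {ι : Type*} [Fintype ι] [DecidableEq ι]
    (ρ Pbar P' : Matrix ι ι ℂ) (hρ : IsState ρ)
    (hPbar : Pbar.IsHermitian ∧ Pbar * Pbar = Pbar)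
    (hP' : P'.PosSemidef) (hP'le : loewnerLE P' 1)
    (lam lam' : ℝ) (hlam0 : 0 ≤ lam) (hlam1 : lam ≤ 1)
    (h1 : 1 - lam ≤ (ρ * Pbar).trace.re)
    (h2 : 1 - lam' ≤ (ρ * P').trace.re) :
    1 - lam' - Real.sqrt (8 * lam) ≤ (ρ * (Pbar * P' * Pbar)).trace.re := by
  have hproj : IsStarProjection Pbar := ⟨hPbar.2, hPbar.1⟩
  have htrace : expectation hρ.1 1 ≤ 1 := by simp [expectation_apply, hρ.2]
  calc 1 - lam' - √(8 * lam) ≤ 1 - lam' - √(4 * lam) := by gcongr; norm_num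
    _ ≤ expectation hρ.1 (Pbar * P' * Pbar) :=
      open scoped MatrixOrder in
      sandwiched_detection_success_general _ htrace hproj.nonneg hproj.le_one hP'.nonneg hP'le h1 h2
end
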